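/- arXiv:1302.7228 — 2 statements merged into one kernel-verified Lean document; each statement's English description precedes it below -/
import Mathlib

section
/- There is a constant b ≥ 1 such that for every real ε with 0 < ε ≤ 1, every string graph with n ≥ 2 vertices and at least ε·n² edges contains a complete bipartite subgraph whose two parts each have size at least ε^b·n/log₂ n; that is, there exist disjoint vertex sets A and B with |A|, |B| ≥ ε^b·n/log₂ n such that every vertex of A is adjacent to every vertex of B. -/
/-- A curve in the plane: the image of a continuous map from `[0,1]` to `ℝ²`. -/
def IsCurve (c : Set (ℝ × ℝ)) : Prop :=
  ∃ f : ℝ → ℝ × ℝ, ContinuousOn f (Set.Icc 0 1) ∧ c = f '' Set.Icc 0 1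

/-- A string graph: an intersection graph of curves in the plane. -/
def IsStringGraph {V : Type*} (G : SimpleGraph V) : Prop :=
  ∃ γ : V → Set (ℝ × ℝ), (∀ v, IsCurve (γ v)) ∧
    ∀ u v : V, u ≠ v → (G.Adj u v ↔ (γ u ∩ γ v).Nonempty)

/-!
At a fine enough scale the curves of a string graph become connected sets of grid vertices, each
traversed by a walk, with the same intersections. The only property of the plane that is needed from
then on is that the grid has no `K_{3,3}` minor.

Suppose that no large biclique is present, so that no vertex lies on many of the walks. Cutting
random walks off at random other ones, and losing only a power of `ε` in the density at each step,
one finds a connected hub with two disjoint connected poles attached to it, and two families of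
pieces of the walks, many pairs of which meet: chords that join the poles outside the hub, and
branches that avoid poles and hub. If two chords are disjoint, then one of them is nearer to a fixed
point `x` on a branch than the other, for otherwise the hub and the two chords on one side, the two
poles and a connection of the chords through `x` on the other would yield a `K_{3,3}` minor. For the
same reason a branch that meets two chords meets every chord between them.

In the resulting partial order disjoint large sets of chords have comparable members, as
incomparable chords intersect. Such an order on `n` elements resembles a linear one up to a factor
`log n`, and together with the betweenness of the branches this produces two chords with `t`
chords between them and `2 t` common neighbours: a biclique after all.
-/

namespace StringGraph

open Function SimpleGraph

open scoped BigOperators Topology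

/-! ### Connected vertex sets and bipartite minors -/

section Connectivity

variable {α : Type*} {H : SimpleGraph α} {S T S' T' : Set α} {x y : α}

/-- The graph of those edges of `H` that lie inside `S`, on the full vertex type. Reachability in it
is reachability inside `S` without any subtype of vertices. -/
abbrev within (H : SimpleGraph α) (S : Set α) : SimpleGraph α :=
  (H.induce S).spanningCoe

lemma within_adj : (within H S).Adj x y ↔ x ∈ S ∧ y ∈ S ∧ H.Adj x y := by
  simp only [within, map_adj, comap_adj, Embedding.subtype_apply, Subtype.exists]
  constructor
  · rintro ⟨a, ha, b, hb, hab, rfl, rfl⟩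
    exact ⟨ha, hb, hab⟩
  · rintro ⟨hx, hy, hxy⟩
    exact ⟨x, hx, y, hy, hxy, rfl, rfl⟩

lemma within_mono (h : S ⊆ T) : within H S ≤ within H T := fun _ _ hab => by
  rw [within_adj] at hab ⊢
  exact ⟨h hab.1, h hab.2.1, hab.2.2⟩

lemma mem_of_reachable_within (h : (within H S).Reachable x y) (hx : x ∈ S) : y ∈ S := by
  obtain ⟨w⟩ := h
  induction w with
  | nil => exact hx
  | cons hab _ ih => exact ih (within_adj.1 hab).2.1

lemma preconnected_induce_iff_reachable_within :
    (H.induce S).Preconnected ↔ ∀ x ∈ S, ∀ y ∈ S, (within H S).Reachable x y := by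
  refine ⟨fun h x hx y hy => (h ⟨x, hx⟩ ⟨y, hy⟩).map
    (Embedding.spanningCoe (H.induce S)).toHom, fun h => ?_⟩
  rintro ⟨x, hx⟩ ⟨y, hy⟩
  obtain ⟨w⟩ := h x hx y hy
  induction w with
  | nil => rfl
  | cons hab _ ih =>
    obtain ⟨_, hb, hab⟩ := within_adj.1 hab
    have hab : (H.induce S).Adj ⟨_, hx⟩ ⟨_, hb⟩ := hab
    exact hab.reachable.trans (ih hb hy)

lemma preconnected_induce_singleton (x : α) : (H.induce {x}).Preconnected :=
  Preconnected.of_subsingleton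

lemma preconnected_induce_image {T : Set S} (h : ((H.induce S).induce T).Preconnected) :
    (H.induce (Subtype.val '' T)).Preconnected := by
  let f : (H.induce S).induce T →g H.induce (Subtype.val '' T) :=
    ⟨fun z => ⟨z.1.1, z.1, z.2, rfl⟩, fun hab => hab⟩
  refine h.map f ?_
  rintro ⟨_, z, hz, rfl⟩
  exact ⟨⟨z, hz⟩, rfl⟩

/-- There is an edge of `H` from `S` to `T`. -/
def Touches (H : SimpleGraph α) (S T : Set α) : Prop :=
  ∃ x ∈ S, ∃ y ∈ T, H.Adj x y

lemma Touches.symm (h : Touches H S T) : Touches H T S := by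
  obtain ⟨x, hx, y, hy, hxy⟩ := h
  exact ⟨y, hy, x, hx, hxy.symm⟩

lemma Touches.mono (h : Touches H S T) (hS : S ⊆ S') (hT : T ⊆ T') : Touches H S' T' := by
  obtain ⟨x, hx, y, hy, hxy⟩ := h
  exact ⟨x, hS hx, y, hT hy, hxy⟩

lemma Touches.nonempty_left (h : Touches H S T) : S.Nonempty :=
  h.imp fun _ hx => hx.1

lemma preconnected_union (hS : (H.induce S).Preconnected) (hT : (H.induce T).Preconnected)
    (h : (S ∩ T).Nonempty) : (H.induce (S ∪ T)).Preconnected :=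
  (induce_union_connected hS hT h).preconnected

lemma preconnected_union_of_touches (hS : (H.induce S).Preconnected)
    (hT : (H.induce T).Preconnected) (h : Touches H S T) : (H.induce (S ∪ T)).Preconnected := by
  obtain ⟨x, hx, y, hy, hxy⟩ := h
  exact (connected_induce_union hS hT hx hy hxy).preconnected

/-- The witness is the component of `x` in `S \ T`; a walk in `S` to `T` must leave it through
an edge into `T`. -/
lemma exists_preconnected_touching_inter (hS : (H.induce S).Preconnected) (hx : x ∈ S) (hxT : x ∉ T)
    (hT : (S ∩ T).Nonempty) :
    ∃ P ⊆ S, x ∈ P ∧ (H.induce P).Preconnected ∧ Disjoint P T ∧ Touches H P (S ∩ T) := by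
  let C := (within H (S \ T)).connectedComponentMk x
  have mem_C {z : α} : z ∈ C.supp ↔ (within H (S \ T)).Reachable x z := by
    rw [ConnectedComponent.mem_supp_iff, ConnectedComponent.eq, reachable_comm]
  have C_subset : C.supp ⊆ S \ T := fun z hz => mem_of_reachable_within (mem_C.1 hz) ⟨hx, hxT⟩
  refine ⟨C.supp, C_subset.trans Set.sdiff_subset, mem_C.2 .rfl, ?_,
    Set.disjoint_left.2 fun z hz => (C_subset hz).2, ?_⟩
  · exact Preconnected.mono (G := (within H (S \ T)).induce C.supp)
      (fun _ _ hab => (within_adj.1 hab).2.2) C.connected_toSimpleGraph.preconnected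
  · obtain ⟨w, hwS, hwT⟩ := hT
    obtain ⟨p⟩ := preconnected_induce_iff_reachable_within.1 hS x hx w hwS
    obtain ⟨d, -, hd₁, hd₂⟩ :=
      p.exists_boundary_dart C.supp (mem_C.2 .rfl) fun hw => (C_subset hw).2 hwT
    obtain ⟨-, hdS, hadj⟩ := within_adj.1 d.adj
    refine ⟨d.fst, hd₁, d.snd, ⟨hdS, ?_⟩, hadj⟩
    by_contra hdT
    exact hd₂ (mem_C.2 ((mem_C.1 hd₁).trans
      (within_adj.2 ⟨C_subset hd₁, ⟨hdS, hdT⟩, hadj⟩).reachable))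

lemma exists_preconnected_sdiff_singleton (hS : (H.induce S).Preconnected) (hf : S.Finite)
    (hn : S.Nontrivial) :
    ∃ v ∈ S, (H.induce (S \ {v})).Preconnected := by
  have : Finite S := hf
  have : Nontrivial S := hn.coe_sort
  obtain ⟨v, hv⟩ :=
    Connected.exists_connected_induce_compl_singleton_of_finite_nontrivial (G := H.induce S) ⟨hS⟩
  refine ⟨v, v.2, ?_⟩
  have himage : Subtype.val '' ({v}ᶜ : Set S) = S \ {v.1} := by
    rw [Set.image_compl_eq_range_sdiff_image Subtype.val_injective, Subtype.range_coe,
      Set.image_singleton]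
  exact himage ▸ preconnected_induce_image hv.preconnected

lemma touches_singleton_sdiff (hS : (H.induce S).Preconnected) (hx : x ∈ S)
    (hn : (S \ {x}).Nonempty) : Touches H {x} (S \ {x}) := by
  obtain ⟨w, hw⟩ := hn
  obtain ⟨P, hPS, -, -, hd, p, hp, q, hq, hpq⟩ :=
    exists_preconnected_touching_inter (T := S \ {x}) hS hx (by simp) ⟨w, hw.1, hw⟩
  exact ⟨p, by_contra fun hpx => Set.disjoint_left.1 hd hp ⟨hPS hp, hpx⟩, q, hq.2, hpq⟩

lemma exists_finite_preconnected_subset (hS : (H.induce S).Preconnected) (hT : T.Finite)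
    (hTS : T ⊆ S) (hn : T.Nonempty) :
    ∃ P, T ⊆ P ∧ P ⊆ S ∧ P.Finite ∧ (H.induce P).Preconnected := by
  lift T to Finset α using hT
  classical
  obtain ⟨P, hTP, hP⟩ := extend_finset_to_connected hS
    (t := T.subtype (· ∈ S)) ⟨⟨hn.some, hTS hn.some_mem⟩, by simpa using hn.some_mem⟩
  refine ⟨Subtype.val '' (P : Set S), fun z hz => ?_, Subtype.coe_image_subset _ _,
    P.finite_toSet.image _, preconnected_induce_image hP.preconnected⟩
  exact ⟨⟨z, hTS hz⟩, hTP (by simpa using hz), rfl⟩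

end Connectivity

section BicliqueModel

variable {α ι κ : Type*} {H : SimpleGraph α} {A P Q D : Set α}

/-- The sets `A i` and `B j` are the branch sets of a complete bipartite minor of `H`. -/
structure IsBicliqueModel (H : SimpleGraph α) (A : ι → Set α) (B : κ → Set α) : Prop where
  preconnected_left : ∀ i, (H.induce (A i)).Preconnected
  preconnected_right : ∀ j, (H.induce (B j)).Preconnected
  disjoint_left : Pairwise (Disjoint on A)
  disjoint_right : Pairwise (Disjoint on B)
  disjoint : ∀ i j, Disjoint (A i) (B j)
  touches : ∀ i j, Touches H (A i) (B j)

/-- `H` has no `K_{3,3}` minor, where branch sets are allowed to be infinite. -/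
def K33MinorFree (H : SimpleGraph α) : Prop :=
  ∀ A B : Fin 3 → Set α, ¬ IsBicliqueModel H A B

lemma pairwise_disjoint_vec_three {P Q R : Set α} (hPQ : Disjoint P Q) (hPR : Disjoint P R)
    (hQR : Disjoint Q R) : Pairwise (Disjoint on ![P, Q, R]) := by
  intro i j hij
  fin_cases i <;> fin_cases j <;>
    first | exact absurd rfl hij | assumption | exact Disjoint.symm (by assumption)

lemma IsBicliqueModel.comp_left {ι' : Type*} {A : ι → Set α} {B : κ → Set α}
    (h : IsBicliqueModel H A B) {f : ι' → ι} (hf : Injective f) :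
    IsBicliqueModel H (A ∘ f) B where
  preconnected_left := fun i => h.preconnected_left (f i)
  preconnected_right := h.preconnected_right
  disjoint_left := fun _ _ hij => h.disjoint_left (hf.ne hij)
  disjoint_right := h.disjoint_right
  disjoint := fun i => h.disjoint (f i)
  touches := fun i => h.touches (f i)

lemma IsBicliqueModel.shrink {A A' : ι → Set α} {B : κ → Set α} (h : IsBicliqueModel H A B)
    (hA' : ∀ i, A' i ⊆ A i) (hconn : ∀ i, (H.induce (A' i)).Preconnected)
    (htouch : ∀ i j, Touches H (A' i) (B j)) : IsBicliqueModel H A' B where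
  preconnected_left := hconn
  preconnected_right := h.preconnected_right
  disjoint_left := fun i j hij => (h.disjoint_left hij).mono (hA' i) (hA' j)
  disjoint_right := h.disjoint_right
  disjoint := fun i j => (h.disjoint i j).mono_left (hA' i)
  touches := htouch

lemma IsBicliqueModel.transfer [DecidableEq κ] {B : κ → Set α}
    (h : IsBicliqueModel H (fun _ : Unit => P ∪ Q) B) (hPQ : Disjoint P Q)
    (hP : (H.induce P).Preconnected) (hQ : (H.induce Q).Preconnected) (htouch : Touches H P Q)
    (l : κ) (hl : Touches H Q (B l)) (hPB : ∀ k ≠ l, Touches H P (B k)) :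
    IsBicliqueModel H (fun _ : Unit => P) (update B l (B l ∪ Q)) where
  preconnected_left := fun _ => hP
  preconnected_right := fun k => by
    rcases eq_or_ne k l with rfl | hk
    · rw [update_self]
      exact preconnected_union_of_touches (h.preconnected_right k) hQ hl.symm
    · rw [update_of_ne hk]
      exact h.preconnected_right k
  disjoint_left := fun i j hij => absurd (Subsingleton.elim i j) hij
  disjoint_right := by
    have disjoint_l (k : κ) (hk : k ≠ l) : Disjoint (B k) (B l ∪ Q) :=
      Set.disjoint_union_right.2 ⟨h.disjoint_right hk,
        ((h.disjoint () k).mono_left Set.subset_union_right).symm⟩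
    intro i k hik
    rcases eq_or_ne i l with rfl | hi
    · simpa only [onFun, update_self, update_of_ne hik.symm] using (disjoint_l k hik.symm).symm
    rcases eq_or_ne k l with rfl | hk
    · simpa only [onFun, update_self, update_of_ne hi] using disjoint_l i hi
    · simpa only [onFun, update_of_ne hi, update_of_ne hk] using h.disjoint_right hik
  disjoint := fun _ k => by
    have hPk := (h.disjoint () k).mono_left (Set.subset_union_left : P ⊆ P ∪ Q)
    rcases eq_or_ne k l with rfl | hk
    · simpa only [update_self] using Set.disjoint_union_right.2 ⟨hPk, hPQ⟩
    · simpa only [update_of_ne hk] using hPk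
  touches := fun _ k => by
    rcases eq_or_ne k l with rfl | hk
    · simpa only [update_self] using htouch.mono le_rfl Set.subset_union_right
    · simpa only [update_of_ne hk] using hPB k hk

lemma IsBicliqueModel.exists_of_union {B : κ → Set α}
    (h : IsBicliqueModel H (fun _ : Unit => P ∪ Q) B) (hPQ : Disjoint P Q)
    (hP : (H.induce P).Preconnected) (hQ : (H.induce Q).Preconnected) (htouch : Touches H P Q)
    (l : κ) (hPB : ∀ k ≠ l, Touches H P (B k)) :
    ∃ Y : κ → Set α, (∀ j, B j ⊆ Y j ∧ Y j ⊆ B j ∪ (P ∪ Q)) ∧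
      IsBicliqueModel H (fun _ : Unit => P) Y := by
  classical
  by_cases hl : Touches H P (B l)
  · refine ⟨B, fun _ => ⟨le_rfl, Set.subset_union_left⟩,
      h.shrink (fun _ => Set.subset_union_left) (fun _ => hP) fun _ k => ?_⟩
    rcases eq_or_ne k l with rfl | hk
    exacts [hl, hPB k hk]
  · have hQl : Touches H Q (B l) := by
      obtain ⟨x, hx | hx, hxB⟩ := h.touches () l
      exacts [absurd ⟨x, hx, hxB⟩ hl, ⟨x, hx, hxB⟩]
    refine ⟨_, fun j => ?_, h.transfer hPQ hP hQ htouch l hQl hPB⟩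
    rcases eq_or_ne j l with rfl | hj
    · simp only [update_self]
      exact ⟨Set.subset_union_left, Set.union_subset_union_right _ Set.subset_union_right⟩
    · simp only [update_of_ne hj]
      exact ⟨le_rfl, Set.subset_union_left⟩

/-- Each of the three `B j` is touched by one of the two parts `P`, `Q` of the center, so one part
touches all but at most one of them and the other part can be given to the exception. -/
lemma IsBicliqueModel.exists_smaller_center {B : Fin 3 → Set α}
    (h : IsBicliqueModel H (fun _ : Unit => A) B) (hf : A.Finite) (hn : A.Nontrivial) :
    ∃ A' ⊂ A, ∃ Y : Fin 3 → Set α, (∀ j, B j ⊆ Y j ∧ Y j ⊆ B j ∪ A) ∧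
      IsBicliqueModel H (fun _ : Unit => A') Y := by
  obtain ⟨v, hv, hrest⟩ := exists_preconnected_sdiff_singleton (h.preconnected_left ()) hf hn
  have hvrest : Touches H {v} (A \ {v}) :=
    touches_singleton_sdiff (h.preconnected_left ()) hv (by
      obtain ⟨w, hw, hwv⟩ := hn.exists_ne v
      exact ⟨w, hw, hwv⟩)
  have hunion : {v} ∪ A \ {v} = A := Set.union_sdiff_cancel (Set.singleton_subset_iff.2 hv)
  have hsplit (j : Fin 3) : Touches H {v} (B j) ∨ Touches H (A \ {v}) (B j) := by
    obtain ⟨x, hx, hxB⟩ := h.touches () j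
    rw [← hunion] at hx
    exact hx.imp (fun hx => ⟨x, hx, hxB⟩) (fun hx => ⟨x, hx, hxB⟩)
  have hpigeon : (∃ l, ∀ k ≠ l, Touches H {v} (B k)) ∨
      ∃ l, ∀ k ≠ l, Touches H (A \ {v}) (B k) := by
    simp only [Fin.forall_fin_succ, Fin.isValue, Fin.succ_zero_eq_one, Fin.succ_one_eq_two,
      IsEmpty.forall_iff, and_true, ne_eq, Fin.exists_fin_succ, not_true_eq_false, one_ne_zero,
      not_false_eq_true, forall_const, Fin.reduceEq, true_and, zero_ne_one, IsEmpty.exists_iff,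
      or_false] at hsplit ⊢
    tauto
  rcases hpigeon with ⟨l, hl⟩ | ⟨l, hl⟩
  · obtain ⟨Y, hY⟩ := IsBicliqueModel.exists_of_union (by rwa [hunion]) Set.disjoint_sdiff_right
      (preconnected_induce_singleton v) hrest hvrest l hl
    exact ⟨{v}, hn.ne_singleton.symm.lt_of_le (Set.singleton_subset_iff.2 hv), Y,
      by rwa [hunion] at hY⟩
  · obtain ⟨Y, hY⟩ := IsBicliqueModel.exists_of_union (by rwa [Set.union_comm, hunion])
      Set.disjoint_sdiff_left hrest (preconnected_induce_singleton v) hvrest.symm l hl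
    exact ⟨A \ {v}, Set.sdiff_singleton_ssubset.2 hv, Y, by rwa [Set.union_comm, hunion] at hY⟩

lemma IsBicliqueModel.exists_singleton_center_of_finite {B : Fin 3 → Set α}
    (h : IsBicliqueModel H (fun _ : Unit => A) B) (hf : A.Finite) :
    ∃ a ∈ A, ∃ Y : Fin 3 → Set α, (∀ j, B j ⊆ Y j ∧ Y j ⊆ B j ∪ A) ∧
      IsBicliqueModel H (fun _ : Unit => {a}) Y := by
  induction hcard : A.ncard using Nat.strong_induction_on generalizing A B with
  | _ n ih =>
    obtain ⟨a, rfl⟩ | hn := (h.touches () 0).nonempty_left.exists_eq_singleton_or_nontrivial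
    · exact ⟨a, rfl, B, fun _ => ⟨le_rfl, Set.subset_union_left⟩, h⟩
    obtain ⟨A', hA', Y, hY, hmodel⟩ := h.exists_smaller_center hf hn
    obtain ⟨a, ha, Z, hZ, hmodel⟩ := ih _ (hcard ▸ Set.ncard_lt_ncard hA' hf) hmodel
      (hf.subset hA'.subset) rfl
    refine ⟨a, hA'.subset ha, Z, fun j => ⟨(hY j).1.trans (hZ j).1, (hZ j).2.trans ?_⟩, hmodel⟩
    exact Set.union_subset (hY j).2 (hA'.subset.trans Set.subset_union_right)

lemma IsBicliqueModel.exists_finite_center [Finite κ] [Nonempty κ] {B : κ → Set α}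
    (h : IsBicliqueModel H (fun _ : Unit => A) B) :
    ∃ A' ⊆ A, A'.Finite ∧ IsBicliqueModel H (fun _ : Unit => A') B := by
  choose x hxA y hyB hxy using h.touches ()
  obtain ⟨A', hxA', hA'A, hfin, hA'⟩ := exists_finite_preconnected_subset (h.preconnected_left ())
    (Set.finite_range x) (Set.range_subset_iff.2 hxA) (Set.range_nonempty x)
  exact ⟨A', hA'A, hfin, h.shrink (fun _ => hA'A) (fun _ => hA') fun _ j =>
    ⟨x j, hxA' (Set.mem_range_self j), y j, hyB j, hxy j⟩⟩

lemma IsBicliqueModel.exists_singleton_center {B : Fin 3 → Set α}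
    (h : IsBicliqueModel H (fun _ : Unit => A) B) :
    ∃ a ∈ A, ∃ Y : Fin 3 → Set α, (∀ j, B j ⊆ Y j ∧ Y j ⊆ B j ∪ A) ∧
      IsBicliqueModel H (fun _ : Unit => {a}) Y := by
  obtain ⟨A', hA', hfin, hmodel⟩ := h.exists_finite_center
  obtain ⟨a, ha, Y, hY, hmodel⟩ := hmodel.exists_singleton_center_of_finite hfin
  exact ⟨a, hA' ha, Y,
    fun j => ⟨(hY j).1, (hY j).2.trans (Set.union_subset_union_right _ hA')⟩, hmodel⟩

end BicliqueModel

/-! ### The grid has no `K_{3,3}` minor -/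

/-- The grid graph on `ℤ²`, the discrete model of the plane. -/
noncomputable abbrev grid : SimpleGraph (ℤ × ℤ) := hasse ℤ □ hasse ℤ

/-- The four unit steps of the grid, in counterclockwise order. -/
def step : Fin 4 → ℤ × ℤ := ![(1, 0), (0, 1), (-1, 0), (0, -1)]

lemma grid_adj_iff_exists_step {a b : ℤ × ℤ} : grid.Adj a b ↔ ∃ d, b = a + step d := by
  simp only [grid, boxProd_adj, hasse_adj, Order.covBy_iff_add_one_eq, step, Fin.exists_fin_succ,
    Prod.ext_iff, Prod.fst_add, Prod.snd_add, Matrix.cons_val_zero, Matrix.cons_val_succ,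
    IsEmpty.exists_iff, or_false]
  omega

/-- The indicator of the vertical edge from `(x, y)` to `(x, y + 1)` lying on the downward ray
from `u`. -/
def ray (u : ℤ × ℤ) (x y : ℤ) : ℤ := if u.1 = x ∧ y < u.2 then 1 else 0

/-- An integral unit flow from `u` to `v` on the grid edges inside `S`: `horiz x y` and `vert x y`
are the flows through the edges leaving `(x, y)` to the right and upwards. Once closed up by the
downward rays from `u` and `v` it is the coboundary of `face`, where `face x y` is the value on the
unit square with lower left corner `(x, y)`. -/
structure Flow (S : Set (ℤ × ℤ)) (u v : ℤ × ℤ) where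
  face : ℤ → ℤ → ℤ
  horiz : ℤ → ℤ → ℤ
  vert : ℤ → ℤ → ℤ
  face_below : ∀ x y, face x (y - 1) = face x y + horiz x y
  face_left : ∀ x y, face (x - 1) y + vert x y + ray u x y = face x y + ray v x y
  horiz_eq_zero : ∀ x y, (x, y) ∉ S ∨ (x + 1, y) ∉ S → horiz x y = 0
  vert_eq_zero : ∀ x y, (x, y) ∉ S ∨ (x, y + 1) ∉ S → vert x y = 0

namespace Flow

variable {S T : Set (ℤ × ℤ)} {a b c u v w : ℤ × ℤ}

/-- A flow viewed inside a larger set. -/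
@[simps]
def mono (F : Flow S u v) (h : S ⊆ T) : Flow T u v where
  __ := F
  horiz_eq_zero x y hxy := F.horiz_eq_zero x y (hxy.imp (mt (@h _)) (mt (@h _)))
  vert_eq_zero x y hxy := F.vert_eq_zero x y (hxy.imp (mt (@h _)) (mt (@h _)))

/-- The zero flow. -/
@[simps]
def refl (S : Set (ℤ × ℤ)) (u : ℤ × ℤ) : Flow S u u where
  face _ _ := 0
  horiz _ _ := 0
  vert _ _ := 0
  face_below _ _ := rfl
  face_left _ _ := rfl
  horiz_eq_zero _ _ _ := rfl
  vert_eq_zero _ _ _ := rfl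

/-- The reversed flow. -/
@[simps]
def symm (F : Flow S u v) : Flow S v u where
  face x y := -F.face x y
  horiz x y := -F.horiz x y
  vert x y := -F.vert x y
  face_below x y := by linarith [F.face_below x y]
  face_left x y := by linarith [F.face_left x y]
  horiz_eq_zero x y h := neg_eq_zero.2 (F.horiz_eq_zero x y h)
  vert_eq_zero x y h := neg_eq_zero.2 (F.vert_eq_zero x y h)

/-- The sum of two flows. -/
@[simps]
def trans (F : Flow S u v) (F' : Flow S v w) : Flow S u w where
  face x y := F.face x y + F'.face x y
  horiz x y := F.horiz x y + F'.horiz x y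
  vert x y := F.vert x y + F'.vert x y
  face_below x y := by linarith [F.face_below x y, F'.face_below x y]
  face_left x y := by linarith [F.face_left x y, F'.face_left x y]
  horiz_eq_zero x y h := by rw [F.horiz_eq_zero x y h, F'.horiz_eq_zero x y h, add_zero]
  vert_eq_zero x y h := by rw [F.vert_eq_zero x y h, F'.vert_eq_zero x y h, add_zero]

/-- The flow along one edge to the right. -/
@[simps]
def right (h : v = u + step 0) : Flow {u, v} u v where
  face x y := if x = u.1 ∧ y < u.2 then 1 else 0
  horiz x y := if x = u.1 ∧ y = u.2 then 1 else 0
  vert _ _ := 0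
  face_below x y := by split_ifs <;> omega
  face_left x y := by
    simp only [h, ray, step, Matrix.cons_val_zero, Prod.fst_add, Prod.snd_add]
    split_ifs <;> omega
  horiz_eq_zero x y hS := if_neg fun hxy => by
    simp [h, step, Prod.ext_iff, hxy.1, hxy.2] at hS
  vert_eq_zero _ _ _ := rfl

/-- The flow along one edge upwards. -/
@[simps]
def up (h : v = u + step 1) : Flow {u, v} u v where
  face _ _ := 0
  horiz _ _ := 0
  vert x y := if x = u.1 ∧ y = u.2 then 1 else 0
  face_below _ _ := rfl
  face_left x y := by
    simp only [h, ray, step, Matrix.cons_val_one, Matrix.cons_val_zero, Prod.fst_add, Prod.snd_add]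
    split_ifs <;> omega
  horiz_eq_zero _ _ _ := rfl
  vert_eq_zero x y hS := if_neg fun hxy => by
    simp [h, step, Prod.ext_iff, hxy.1, hxy.2] at hS

lemma exists_of_step (a : ℤ × ℤ) (d : Fin 4) :
    ∃ F : Flow {a, a + step d} a (a + step d),
      F.horiz a.1 a.2 = (if d = 0 then 1 else 0) ∧ F.vert a.1 a.2 = if d = 1 then 1 else 0 := by
  fin_cases d
  · exact ⟨right rfl, by simp, by simp⟩
  · exact ⟨up rfl, by simp, by simp⟩
  · refine ⟨(right (by ext <;> simp [step])).symm.mono (Set.pair_comm _ _).subset, ?_, by simp⟩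
    rw [mono_horiz, symm_horiz, right_horiz]
    simp [step]
  · refine ⟨(up (by ext <;> simp [step])).symm.mono (Set.pair_comm _ _).subset, by simp, ?_⟩
    rw [mono_vert, symm_vert, up_vert]
    simp [step]

lemma exists_of_adj (h : grid.Adj a b) : Nonempty (Flow {a, b} a b) := by
  obtain ⟨d, rfl⟩ := grid_adj_iff_exists_step.1 h
  exact (exists_of_step a d).nonempty

lemma exists_of_reachable (h : (within grid S).Reachable a b) : Nonempty (Flow S a b) := by
  obtain ⟨p⟩ := h
  induction p with
  | nil => exact ⟨refl S _⟩
  | cons hab _ ih =>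
    obtain ⟨ha, hb, hab⟩ := within_adj.1 hab
    obtain ⟨F⟩ := exists_of_adj hab
    obtain ⟨F'⟩ := ih
    exact ⟨(F.mono (Set.pair_subset ha hb)).trans F'⟩

/-- A circulation changes its face value along a grid edge that it avoids only in the two directions
where the associated unit square crosses an edge at the starting point. -/
lemma face_step (F : Flow S u u) {d : Fin 4} (h : b + step d ∉ S) :
    F.face (b + step d).1 (b + step d).2 = F.face b.1 b.2 +
      ((if d = 3 then F.horiz b.1 b.2 else 0) - if d = 2 then F.vert b.1 b.2 else 0) := by
  have hb₁ := F.face_below b.1 b.2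
  have hb₂ := F.face_left b.1 b.2
  have hc₁ := F.face_below (b + step d).1 (b + step d).2
  have hc₂ := F.face_left (b + step d).1 (b + step d).2
  rw [F.horiz_eq_zero _ _ (.inl (by exact h))] at hc₁
  rw [F.vert_eq_zero _ _ (.inl (by exact h))] at hc₂
  fin_cases d <;> simp [step, ← sub_eq_add_neg] at * <;> omega

lemma face_eq_of_reachable (F : Flow S u u) (hT : Disjoint T S)
    (h : (within grid T).Reachable a b) : F.face a.1 a.2 = F.face b.1 b.2 := by
  obtain ⟨p⟩ := h
  induction p with
  | nil => rfl
  | cons hab _ ih =>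
    obtain ⟨ha, hb, hab⟩ := within_adj.1 hab
    obtain ⟨d, rfl⟩ := grid_adj_iff_exists_step.1 hab
    rw [← ih, F.face_step (Set.disjoint_left.1 hT hb),
      F.horiz_eq_zero _ _ (.inl (Set.disjoint_left.1 hT ha)),
      F.vert_eq_zero _ _ (.inl (Set.disjoint_left.1 hT ha)), ite_self, ite_self, sub_zero, add_zero]

end Flow

/-- Close up paths through the `P j` from `a` to `b` to three circulations, one for each pair of
indices. The face values of the `i`-th one at `a + step (d i)` and at `c` agree. The three face
values at `c` add up to zero, whereas those at the `a + step (d i)` add up to the winding number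
`± 1` of the three directions around `a`. -/
lemma exists_not_disjoint_of_reachable {a b c : ℤ × ℤ} {d : Fin 3 → Fin 4} (hd : Injective d)
    {P Q : Fin 3 → Set (ℤ × ℤ)} (hP : ∀ j, (within grid (P j)).Reachable (a + step (d j)) b)
    (hQ : ∀ j, (within grid (Q j)).Reachable (a + step (d j)) c)
    (hdP : ∀ j, a + step (d j) ∈ P j) (hdQ : ∀ j, a + step (d j) ∈ Q j)
    (haP : ∀ j, a ∉ P j) (haQ : ∀ j, a ∉ Q j) :
    ∃ i j, i ≠ j ∧ ¬ Disjoint (Q i) (P j) := by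
  by_contra! hdisj
  have exists_flow (j : Fin 3) : ∃ F : Flow (insert a (P j)) a b,
      F.horiz a.1 a.2 = (if d j = 0 then 1 else 0) ∧
        F.vert a.1 a.2 = if d j = 1 then 1 else 0 := by
    obtain ⟨E, hEh, hEv⟩ := Flow.exists_of_step a (d j)
    obtain ⟨F⟩ := Flow.exists_of_reachable (hP j)
    refine ⟨(E.mono (Set.insert_subset_insert (Set.singleton_subset_iff.2 (hdP j)))).trans
      (F.mono (Set.subset_insert _ _)), ?_, ?_⟩
    · simp [hEh, F.horiz_eq_zero a.1 a.2 (.inl (haP j))]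
    · simp [hEv, F.vert_eq_zero a.1 a.2 (.inl (haP j))]
  choose F horiz_F vert_F using exists_flow
  have face_diff (i j k : Fin 3) (hij : i ≠ j) (hik : i ≠ k) :
      (F j).face c.1 c.2 - (F k).face c.1 c.2 = (F j).face a.1 a.2 - (F k).face a.1 a.2 +
        ((if d i = 3 then (if d j = 0 then 1 else 0) - (if d k = 0 then 1 else 0) else 0) -
          if d i = 2 then (if d j = 1 then 1 else 0) - (if d k = 1 then 1 else 0) else 0) := by
    let C : Flow (insert a (P j) ∪ insert a (P k)) a a :=
      ((F j).mono Set.subset_union_left).trans ((F k).mono Set.subset_union_right).symm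
    have hdisj : Disjoint (Q i) (insert a (P j) ∪ insert a (P k)) := by
      simp [haQ i, hdisj i j hij, hdisj i k hik]
    have hC := C.face_step (Set.disjoint_left.1 hdisj (hdQ i))
    rw [C.face_eq_of_reachable hdisj (hQ i)] at hC
    simpa [C, ← sub_eq_add_neg, horiz_F, vert_F] using hC
  have winding : ∀ d : Fin 3 → Fin 4, Injective d → ∑ i,
      ((if d i = 3 then (if d (i + 1) = 0 then (1 : ℤ) else 0) - (if d (i + 2) = 0 then 1 else 0)
        else 0) -
      if d i = 2 then (if d (i + 1) = 1 then 1 else 0) - (if d (i + 2) = 1 then 1 else 0)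
        else 0) ≠ 0 := by
    decide
  refine winding d hd ?_
  have h₀ := face_diff 0 1 2 (by decide) (by decide)
  have h₁ := face_diff 1 2 0 (by decide) (by decide)
  have h₂ := face_diff 2 0 1 (by decide) (by decide)
  rw [Fin.sum_univ_three]
  linarith!

theorem k33MinorFree_grid : K33MinorFree grid := by
  intro A B h
  have hcenter : IsBicliqueModel grid (fun _ : Unit => A 1) B :=
    h.comp_left (f := fun _ : Unit => 1) fun _ _ _ => rfl
  obtain ⟨a, ha, Y, hY, hmodel⟩ := hcenter.exists_singleton_center
  have exists_step (j : Fin 3) : ∃ d, a + step d ∈ Y j := by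
    obtain ⟨x, rfl, y, hy, hxy⟩ := hmodel.touches () j
    obtain ⟨d, rfl⟩ := grid_adj_iff_exists_step.1 hxy
    exact ⟨d, hy⟩
  choose d hd using exists_step
  have hdinj : Injective d := fun i j hij => by
    by_contra hne
    exact Set.disjoint_left.1 (hmodel.disjoint_right hne) (hd i) (hij ▸ hd j)
  have disjoint_Y {i : Fin 3} (hi : i ≠ 1) (j : Fin 3) : Disjoint (A i) (Y j) :=
    (Set.disjoint_union_right.2 ⟨h.disjoint i j, h.disjoint_left hi⟩).mono_right (hY j).2
  have reachable {i : Fin 3} {x : ℤ × ℤ} (hx : x ∈ A i) (j : Fin 3) :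
      (within grid (Y j ∪ A i)).Reachable (a + step (d j)) x :=
    preconnected_induce_iff_reachable_within.1
      (preconnected_union_of_touches (hmodel.preconnected_right j) (h.preconnected_left i)
        ((h.touches i j).symm.mono (hY j).1 le_rfl)) _ (.inl (hd j)) _ (.inr hx)
  have not_mem {i : Fin 3} (hi : i ≠ 1) (j : Fin 3) : a ∉ Y j ∪ A i := by
    rintro (haY | haA)
    · exact Set.disjoint_left.1 (hmodel.disjoint () j) rfl haY
    · exact Set.disjoint_left.1 (h.disjoint_left hi) haA ha
  obtain ⟨b, hb⟩ := (h.touches 2 0).nonempty_left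
  obtain ⟨c, hc⟩ := (h.touches 0 0).nonempty_left
  obtain ⟨i, j, hij, hdisj⟩ := exists_not_disjoint_of_reachable hdinj (reachable hb) (reachable hc)
    (fun j => .inl (hd j)) (fun j => .inl (hd j)) (not_mem (by decide)) (not_mem (by decide))
  refine hdisj ?_
  simp only [Set.disjoint_union_left, Set.disjoint_union_right]
  exact ⟨⟨hmodel.disjoint_right hij, disjoint_Y (by decide) j⟩,
    (disjoint_Y (by decide) i).symm, h.disjoint_left (by decide)⟩

/-! ### Lazy walks -/

section LazyWalk

variable {α : Type*} {H : SimpleGraph α} {f : ℕ → α} {S T P Q R : Set α}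

/-- An infinite walk in `H` that may also stand still. Its range is a region of `H`, and restricting
it to a bounded interval of times only requires stopping it. -/
def IsLazyWalk (H : SimpleGraph α) (f : ℕ → α) : Prop :=
  ∀ i, f i = f (i + 1) ∨ H.Adj (f i) (f (i + 1))

lemma IsLazyWalk.preconnected_image (hf : IsLazyWalk H f) {s : Set ℕ} (hs : s.OrdConnected) :
    (H.induce (f '' s)).Preconnected := by
  have reachable {p q : ℕ} (hp : p ∈ s) (hpq : p ≤ q) :
      q ∈ s → (within H (f '' s)).Reachable (f p) (f q) := by
    induction q, hpq using Nat.le_induction with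
    | base => exact fun _ => .rfl
    | succ q hpq ih =>
      intro hq'
      have hq : q ∈ s := hs.out hp hq' ⟨hpq, q.le_succ⟩
      refine (ih hq).trans ?_
      rcases hf q with heq | hadj
      · rw [heq]
      · exact Adj.reachable <| within_adj.2
          ⟨Set.mem_image_of_mem f hq, Set.mem_image_of_mem f hq', hadj⟩
  rw [preconnected_induce_iff_reachable_within]
  rintro _ ⟨p, hp, rfl⟩ _ ⟨q, hq, rfl⟩
  rcases le_total p q with hpq | hpq
  exacts [reachable hp hpq hq, (reachable hq hpq hp).symm]

lemma IsLazyWalk.preconnected_range (hf : IsLazyWalk H f) :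
    (H.induce (Set.range f)).Preconnected :=
  Set.image_univ ▸ hf.preconnected_image Set.ordConnected_univ

lemma IsLazyWalk.comp_min (hf : IsLazyWalk H f) (t : ℕ) : IsLazyWalk H fun i => f (min i t) := by
  intro i
  rcases lt_or_ge i t with hi | hi
  · simpa only [min_eq_left hi.le, min_eq_left (Nat.succ_le_of_lt hi)] using hf i
  · exact .inl (by simp only [min_eq_right hi, min_eq_right (hi.trans i.le_succ)])

lemma IsLazyWalk.comp_sub (hf : IsLazyWalk H f) (t : ℕ) : IsLazyWalk H fun i => f (t - i) := by
  intro i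
  rcases lt_or_ge i t with hi | hi
  · have hsub : t - i = t - (i + 1) + 1 := by omega
    simpa only [hsub, eq_comm, adj_comm] using hf (t - (i + 1))
  · exact .inl (by simp only [Nat.sub_eq_zero_of_le hi, Nat.sub_eq_zero_of_le (hi.trans i.le_succ)])

/-- The first time at which `f` visits `S`, or `⊤` if it never does. -/
noncomputable def hittingTime (f : ℕ → α) (S : Set α) : ℕ∞ :=
  ⨅ i : f ⁻¹' S, (i : ℕ∞)

lemma hittingTime_le {i : ℕ} (hi : f i ∈ S) : hittingTime f S ≤ i :=
  iInf_le (fun i : f ⁻¹' S => (i : ℕ∞)) ⟨i, hi⟩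

lemma hittingTime_lt_iff {t : ℕ∞} : hittingTime f S < t ↔ ∃ i : ℕ, i < t ∧ f i ∈ S := by
  simp [hittingTime, iInf_lt_iff, and_comm]

lemma natCast_lt_hittingTime_iff {i : ℕ} : i < hittingTime f S ↔ ∀ k ≤ i, f k ∉ S := by
  refine ⟨fun h k hk hkS => ?_, fun h => ?_⟩
  · exact ((hittingTime_le hkS).trans (Nat.cast_le.2 hk)).not_gt h
  · by_contra! hle
    obtain ⟨k, hk, hkS⟩ := hittingTime_lt_iff.1 (hle.trans_lt (Nat.cast_lt.2 i.lt_succ_self))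
    exact h k (Nat.le_of_lt_succ (Nat.cast_lt.1 hk)) hkS

lemma notMem_of_lt_hittingTime {i : ℕ} (hi : i < hittingTime f S) : f i ∉ S :=
  natCast_lt_hittingTime_iff.1 hi i le_rfl

lemma exists_hittingTime_eq (h : ∃ i, f i ∈ S) : ∃ t : ℕ, hittingTime f S = t ∧ f t ∈ S := by
  obtain ⟨i, hi⟩ := h
  have : Nonempty (f ⁻¹' S) := ⟨i, hi⟩
  obtain ⟨t, ht⟩ := ENat.exists_eq_iInf fun i : f ⁻¹' S => (i : ℕ∞)
  exact ⟨t, ht.symm, t.2⟩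

lemma mem_of_hittingTime_eq {t : ℕ} (ht : hittingTime f S = t) : f t ∈ S := by
  obtain ⟨i, -, hi⟩ := hittingTime_lt_iff.1 (ht.trans_lt (ENat.natCast_lt_top t))
  obtain ⟨s, hs, hsS⟩ := exists_hittingTime_eq ⟨i, hi⟩
  rwa [← Nat.cast_inj.1 (hs.symm.trans ht)]

/-- The part of `f` strictly before its first visit to `S`. -/
def prefixBefore (f : ℕ → α) (S : Set α) : Set α :=
  f '' {i | i < hittingTime f S}

lemma prefixBefore_subset_range : prefixBefore f S ⊆ Set.range f :=
  Set.image_subset_range _ _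

lemma disjoint_prefixBefore : Disjoint (prefixBefore f S) S := by
  rw [Set.disjoint_left]
  rintro _ ⟨i, hi, rfl⟩
  exact notMem_of_lt_hittingTime hi

lemma zero_notMem_of_prefixBefore_nonempty (h : (prefixBefore f S).Nonempty) : f 0 ∉ S := by
  obtain ⟨_, i, hi, -⟩ := h
  exact natCast_lt_hittingTime_iff.1 hi 0 i.zero_le

lemma hittingTime_lt_iff_prefixBefore :
    hittingTime f S < hittingTime f T ↔ (prefixBefore f T ∩ S).Nonempty := by
  rw [hittingTime_lt_iff, prefixBefore, Set.image_inter_nonempty_iff]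
  rfl

lemma hittingTime_lt_or_lt_or_mem (h : ∃ i, f i ∈ S) (T : Set α) :
    hittingTime f S < hittingTime f T ∨ hittingTime f T < hittingTime f S ∨
      ∃ t : ℕ, hittingTime f S = t ∧ f t ∈ S ∧ f t ∈ T := by
  obtain ⟨t, ht, htS⟩ := exists_hittingTime_eq h
  refine (lt_trichotomy (hittingTime f S) (hittingTime f T)).imp_right (Or.symm ∘ .imp_left ?_)
  exact fun heq => ⟨t, ht, htS, mem_of_hittingTime_eq (heq ▸ ht)⟩

lemma exists_first_visit (h0 : f 0 ∉ S) (h : ∃ i, f i ∈ S) :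
    ∃ t : ℕ, f t ∉ S ∧ f (t + 1) ∈ S ∧ prefixBefore f S = f '' Set.Iic t := by
  obtain ⟨_ | t, ht, htS⟩ := exists_hittingTime_eq h
  · exact absurd htS h0
  refine ⟨t, notMem_of_lt_hittingTime (ht ▸ Nat.cast_lt.2 t.lt_succ_self), htS, ?_⟩
  ext
  simp only [prefixBefore, ht, Nat.cast_lt, Nat.lt_succ_iff, Set.Iic]

lemma IsLazyWalk.adj_of_notMem (hf : IsLazyWalk H f) {i : ℕ} (h : f i ∈ S ↔ f (i + 1) ∉ S) :
    H.Adj (f i) (f (i + 1)) :=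
  (hf i).resolve_left fun heq => by rw [heq] at h; tauto

lemma IsLazyWalk.exists_range_eq_prefixBefore (hf : IsLazyWalk H f) (h0 : f 0 ∉ S) :
    ∃ g, IsLazyWalk H g ∧ g 0 = f 0 ∧ Set.range g = prefixBefore f S := by
  by_cases h : ∃ i, f i ∈ S
  · obtain ⟨t, -, -, hpre⟩ := exists_first_visit h0 h
    refine ⟨_, hf.comp_min t, by simp only [Nat.zero_min], hpre ▸ ?_⟩
    ext x
    constructor
    · rintro ⟨i, rfl⟩
      exact ⟨min i t, min_le_right i t, rfl⟩
    · rintro ⟨i, hi, rfl⟩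
      exact ⟨i, congrArg f (min_eq_left hi)⟩
  · refine ⟨f, hf, rfl, prefixBefore_subset_range.antisymm' ?_⟩
    rintro _ ⟨i, rfl⟩
    exact ⟨i, natCast_lt_hittingTime_iff.2 fun k _ hk => h ⟨k, hk⟩, rfl⟩

/-- The prefix traversed backwards, starting next to `S`. -/
lemma IsLazyWalk.exists_range_eq_prefixBefore_touching (hf : IsLazyWalk H f) (h0 : f 0 ∉ S)
    (h : ∃ i, f i ∈ S) :
    ∃ g, IsLazyWalk H g ∧ Touches H S {g 0} ∧ Set.range g = prefixBefore f S := by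
  obtain ⟨t, ht, htS, hpre⟩ := exists_first_visit h0 h
  refine ⟨_, hf.comp_sub t, ⟨_, htS, _, rfl, ?_⟩, hpre ▸ ?_⟩
  · exact (hf.adj_of_notMem (S := S) (by tauto)).symm
  · ext x
    constructor
    · rintro ⟨i, rfl⟩
      exact ⟨t - i, Nat.sub_le t i, rfl⟩
    · rintro ⟨i, hi, rfl⟩
      exact ⟨t - i, congrArg f (Nat.sub_sub_self hi)⟩

/-- The part of `f` strictly between its first visit to `T` and its last preceding visit to `S`. -/
def chord (f : ℕ → α) (S T : Set α) : Set α :=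
  f '' {i | ∃ s t : ℕ, i ∈ Set.Ioo s t ∧ f s ∈ S ∧ hittingTime f T = t ∧ ∀ k ∈ Set.Ioo s t, f k ∉ S}

lemma chord_subset_range : chord f S T ⊆ Set.range f :=
  Set.image_subset_range _ _

lemma disjoint_chord_left : Disjoint (chord f S T) S := by
  rw [Set.disjoint_left]
  rintro _ ⟨i, ⟨s, t, hi, -, -, h⟩, rfl⟩
  exact h i hi

lemma disjoint_chord_right : Disjoint (chord f S T) T := by
  rw [Set.disjoint_left]
  rintro _ ⟨i, ⟨s, t, hi, -, ht, -⟩, rfl⟩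
  exact notMem_of_lt_hittingTime (ht ▸ Nat.cast_lt.2 hi.2)

lemma IsLazyWalk.touches_chord_left (hf : IsLazyWalk H f) (h : (chord f S T).Nonempty) :
    Touches H (chord f S T) S := by
  obtain ⟨_, i, ⟨s, t, hi, hs, ht, hlast⟩, -⟩ := h
  have hs' : s + 1 ∈ Set.Ioo s t := ⟨s.lt_succ_self, (Nat.succ_le_of_lt hi.1).trans_lt hi.2⟩
  refine ⟨_, ⟨s + 1, ⟨s, t, hs', hs, ht, hlast⟩, rfl⟩, f s, hs, ?_⟩
  have := hlast _ hs'
  exact (hf.adj_of_notMem (S := S) (by tauto)).symm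

lemma IsLazyWalk.touches_chord_right (hf : IsLazyWalk H f) (h : (chord f S T).Nonempty) :
    Touches H (chord f S T) T := by
  obtain ⟨_, i, ⟨s, _ | t, hi, hs, ht, hlast⟩, -⟩ := h
  · exact absurd hi.2 i.not_lt_zero
  have ht' : t ∈ Set.Ioo s (t + 1) := ⟨hi.1.trans_le (Nat.le_of_lt_succ hi.2), t.lt_succ_self⟩
  refine ⟨_, ⟨t, ⟨s, _, ht', hs, ht, hlast⟩, rfl⟩, f (t + 1), mem_of_hittingTime_eq ht, ?_⟩
  have := notMem_of_lt_hittingTime (i := t) (ht ▸ Nat.cast_lt.2 t.lt_succ_self)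
  have := mem_of_hittingTime_eq ht
  exact hf.adj_of_notMem (S := T) (by tauto)

lemma IsLazyWalk.preconnected_chord (hf : IsLazyWalk H f) :
    (H.induce (chord f S T)).Preconnected := by
  refine hf.preconnected_image ⟨?_⟩
  rintro i ⟨s, t, hi, hs, ht, hlast⟩ j ⟨_, t', hj, -, ht', -⟩ k hk
  obtain rfl : t = t' := Nat.cast_inj.1 (ht.symm.trans ht')
  exact ⟨s, t, ⟨hi.1.trans_le hk.1, hk.2.trans_lt hj.2⟩, hs, ht, hlast⟩

lemma exists_last_visit {t : ℕ} (h : (prefixBefore f T ∩ S).Nonempty) (ht : hittingTime f T = t) :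
    ∃ s < t, f s ∈ S ∧ ∀ k ∈ Set.Ioo s t, f k ∉ S := by
  obtain ⟨_, ⟨i, hi, rfl⟩, hiS⟩ := h
  rw [Set.mem_ofPred_eq, ht, Nat.cast_lt] at hi
  classical
  have hs := Nat.findGreatest_spec (P := fun k => k < t ∧ f k ∈ S) hi.le ⟨hi, hiS⟩
  exact ⟨_, hs.1, hs.2, fun k hk hkS => Nat.findGreatest_is_greatest hk.1 hk.2.le ⟨hk.2, hkS⟩⟩

lemma exists_chord_inter_nonempty_of_prefix (hT : ∃ i, f i ∈ T) (hd : Disjoint P Q)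
    (hP : (prefixBefore f T ∩ P).Nonempty) (hQ : (prefixBefore f T ∩ Q).Nonempty) :
    (chord f P T ∩ Q).Nonempty ∨ (chord f Q T ∩ P).Nonempty := by
  obtain ⟨t, ht, -⟩ := exists_hittingTime_eq hT
  obtain ⟨p, hpt, hp, hp'⟩ := exists_last_visit hP ht
  obtain ⟨q, hqt, hq, hq'⟩ := exists_last_visit hQ ht
  rcases lt_trichotomy p q with hpq | rfl | hqp
  · exact .inl ⟨f q, ⟨q, ⟨p, t, ⟨hpq, hqt⟩, hp, ht, hp'⟩, rfl⟩, hq⟩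
  · exact absurd hq (Set.disjoint_left.1 hd hp)
  · exact .inr ⟨f p, ⟨p, ⟨q, t, ⟨hqp, hpt⟩, hq, ht, hq'⟩, rfl⟩, hp⟩

lemma hittingTime_ne_of_disjoint (hP : ∃ i, f i ∈ P) (hd : Disjoint P Q) :
    hittingTime f P ≠ hittingTime f Q := by
  obtain ⟨t, ht, htP⟩ := exists_hittingTime_eq hP
  exact fun heq => Set.disjoint_left.1 hd htP (mem_of_hittingTime_eq (heq ▸ ht))

lemma exists_chord_inter_nonempty (hP : ∃ i, f i ∈ P) (hQ : ∃ i, f i ∈ Q) (hR : ∃ i, f i ∈ R)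
    (hPQ : Disjoint P Q) (hPR : Disjoint P R) (hQR : Disjoint Q R) :
    (chord f P R ∩ Q).Nonempty ∨ (chord f Q R ∩ P).Nonempty ∨ (chord f P Q ∩ R).Nonempty ∨
    (chord f R Q ∩ P).Nonempty ∨ (chord f Q P ∩ R).Nonempty ∨ (chord f R P ∩ Q).Nonempty := by
  have last_visited {A B C : Set α} (hC : ∃ i, f i ∈ C) (hAB : Disjoint A B)
      (hA : hittingTime f A < hittingTime f C) (hB : hittingTime f B < hittingTime f C) :=
    exists_chord_inter_nonempty_of_prefix hC hAB (hittingTime_lt_iff_prefixBefore.1 hA)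
      (hittingTime_lt_iff_prefixBefore.1 hB)
  rcases (hittingTime_ne_of_disjoint hP hPQ).lt_or_gt with hpq | hpq <;>
  rcases (hittingTime_ne_of_disjoint hP hPR).lt_or_gt with hpr | hpr <;>
  rcases (hittingTime_ne_of_disjoint hQ hQR).lt_or_gt with hqr | hqr
  · have := last_visited hR hPQ hpr hqr
    tauto
  · have := last_visited hQ hPR hpq hqr
    tauto
  · exact absurd (hpq.trans hqr) hpr.not_gt
  · have := last_visited hQ hPR hpq hqr
    tauto
  · have := last_visited hR hPQ hpr hqr
    tauto
  · exact absurd (hqr.trans hpq) hpr.not_gt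
  · have := last_visited hP hQR hpq hpr
    tauto
  · have := last_visited hP hQR hpq hpr
    tauto

end LazyWalk

/-! ### Averages of indicators -/

section Average

variable {V : Type*} {p q r : Prop}

open Classical in
/-- The Iverson bracket: `1` if `p` holds and `0` otherwise. The average `𝔼 v, iverson (P v)` is the
density of `P`. -/
noncomputable def iverson (p : Prop) : ℝ := if p then 1 else 0

lemma iverson_of_true (hp : p) : iverson p = 1 := if_pos hp

lemma iverson_of_false (hp : ¬ p) : iverson p = 0 := if_neg hp

lemma iverson_nonneg : 0 ≤ iverson p := by unfold iverson; split <;> norm_num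

lemma of_iverson_pos (h : 0 < iverson p) : p :=
  of_not_not fun hp => h.ne' (iverson_of_false hp)

lemma iverson_mono (h : p → q) : iverson p ≤ iverson q := by
  by_cases hp : p
  · rw [iverson_of_true hp, iverson_of_true (h hp)]
  · exact (iverson_of_false hp).trans_le iverson_nonneg

lemma iverson_and : iverson (p ∧ q) = iverson p * iverson q := by
  unfold iverson
  split_ifs <;> simp_all

lemma iverson_or_le : iverson (p ∨ q) ≤ iverson p + iverson q := by
  by_cases hp : p
  · grw [← iverson_nonneg (p := q), iverson_of_true hp, iverson_of_true (.inl hp), add_zero]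
  · grw [← iverson_nonneg (p := p), zero_add]
    exact iverson_mono fun h => h.resolve_left hp

variable [Fintype V]

lemma expect_mono {f g : V → ℝ} (h : ∀ v, f v ≤ g v) : 𝔼 v, f v ≤ 𝔼 v, g v :=
  Finset.expect_le_expect fun v _ => h v

lemma expect_nonneg {f : V → ℝ} (h : ∀ v, 0 ≤ f v) : 0 ≤ 𝔼 v, f v :=
  Finset.expect_nonneg fun v _ => h v

lemma exists_le_of_le_expect [Nonempty V] {f : V → ℝ} {c : ℝ} (h : c ≤ 𝔼 v, f v) :
    ∃ v, c ≤ f v := by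
  obtain ⟨v, -, hv⟩ := Finset.exists_le_of_le_expect Finset.univ_nonempty h
  exact ⟨v, hv⟩

lemma expect_iverson_le_one [Nonempty V] (p : V → Prop) : 𝔼 v, iverson (p v) ≤ 1 :=
  (expect_mono fun _ => iverson_mono fun _ => trivial).trans_eq <| by
    rw [iverson_of_true trivial, Finset.expect_const Finset.univ_nonempty]

lemma pow_expect_le_expect_pow [Nonempty V] {f : V → ℝ} (hf : ∀ v, 0 ≤ f v) (k : ℕ) :
    (𝔼 v, f v) ^ (k + 1) ≤ 𝔼 v, f v ^ (k + 1) := by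
  have hcard : (0 : ℝ) < Fintype.card V := mod_cast Fintype.card_pos
  have h := pow_sum_div_card_le_sum_pow (s := .univ) (fun v _ => hf v) k
  rw [Finset.card_univ] at h
  rw [Fintype.expect_eq_sum_div_card, Fintype.expect_eq_sum_div_card, div_pow,
    pow_succ (Fintype.card V : ℝ), ← div_div]
  exact div_le_div_of_nonneg_right h hcard.le

lemma sq_le_expect_iverson_and [Nonempty V] {P : V → V → Prop} {ρ : ℝ} (hρ : 0 ≤ ρ)
    (h : ρ ≤ 𝔼 v, 𝔼 x, iverson (P v x)) :
    ρ ^ 2 ≤ 𝔼 v, 𝔼 x, 𝔼 y, iverson (P v x ∧ P v y) := by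
  simp only [iverson_and, ← Finset.expect_mul_expect, ← sq]
  exact (pow_le_pow_left₀ hρ h 2).trans <|
    pow_expect_le_expect_pow (fun _ => expect_nonneg fun _ => iverson_nonneg) 1

lemma cube_le_expect_iverson_and [Nonempty V] {P : V → V → Prop} {ρ : ℝ} (hρ : 0 ≤ ρ)
    (h : ρ ≤ 𝔼 v, 𝔼 x, iverson (P v x)) :
    ρ ^ 3 ≤ 𝔼 v, 𝔼 x, 𝔼 y, 𝔼 z, iverson (P v x ∧ P v y ∧ P v z) := by
  simp only [iverson_and, ← Finset.mul_expect, ← Finset.expect_mul]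
  simp only [← sq, ← pow_succ']
  exact (pow_le_pow_left₀ hρ h 3).trans <|
    pow_expect_le_expect_pow (fun _ => expect_nonneg fun _ => iverson_nonneg) 2

lemma expect_iverson_rank_lt_le [Nonempty V] {β : Type*} [LinearOrder β] (t : V → β) (c : β)
    {η : ℝ} (hη : 0 ≤ η) :
    𝔼 d, iverson (c < t d ∧ 𝔼 e, iverson (c < t e ∧ t e ≤ t d) < η) ≤ η := by
  by_cases hne : ∃ d, c < t d ∧ 𝔼 e, iverson (c < t e ∧ t e ≤ t d) < η
  · obtain ⟨m, ⟨-, hm⟩, hmax⟩ := Set.exists_max_image _ t (Set.toFinite _) hne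
    exact (expect_mono fun d => iverson_mono fun hd => ⟨hd.1, hmax d hd⟩).trans hm.le
  · rw [not_exists] at hne
    simp only [iverson_of_false (hne _), Finset.expect_const_zero, hη]

/-- An element of `P` whose `t`-rank above `c` has density less than `η` is rare, and each of the
others dominates at least an `η`-fraction of the elements. -/
lemma mul_sub_le_expect_iverson_rank [Nonempty V] {β : Type*} [LinearOrder β] (t : V → β) (c : β)
    {P : V → Prop} (hP : ∀ d, P d → c < t d) {η : ℝ} (hη : 0 ≤ η) :
    η * (𝔼 d, iverson (P d) - η) ≤ 𝔼 d, 𝔼 e, iverson (P d ∧ c < t e ∧ t e ≤ t d) := by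
  have h_low := expect_iverson_rank_lt_le t c hη
  have h_split : η * 𝔼 d, iverson (P d) ≤
      η * 𝔼 d, iverson (c < t d ∧ 𝔼 e, iverson (c < t e ∧ t e ≤ t d) < η) +
        𝔼 d, 𝔼 e, iverson (P d ∧ c < t e ∧ t e ≤ t d) := by
    simp only [Finset.mul_expect, ← Finset.expect_add_distrib]
    refine expect_mono fun d => ?_
    by_cases hPd : P d
    · simp only [hPd, true_and, hP d hPd, iverson_of_true trivial, mul_one]
      rcases lt_or_ge (𝔼 e, iverson (c < t e ∧ t e ≤ t d)) η with hlt | hge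
      · rw [iverson_of_true hlt, mul_one]
        exact le_add_of_nonneg_right (expect_nonneg fun e => iverson_nonneg)
      · exact hge.trans (le_add_of_nonneg_left (mul_nonneg hη iverson_nonneg))
    · rw [iverson_of_false hPd, mul_zero]
      exact add_nonneg (mul_nonneg hη iverson_nonneg) (expect_nonneg fun _ => iverson_nonneg)
  nlinarith

/-- The six orders in which three elements can be listed. -/
lemma expect_sum_orders (φ : V → V → V → ℝ) :
    𝔼 p, 𝔼 q, 𝔼 r, (φ p q r + φ q p r + φ p r q + φ r p q + φ q r p + φ r q p) =
      6 * 𝔼 p, 𝔼 q, 𝔼 r, φ p q r := by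
  have swap₁₂ (ψ : V → V → V → ℝ) : 𝔼 p, 𝔼 q, 𝔼 r, ψ q p r = 𝔼 p, 𝔼 q, 𝔼 r, ψ p q r :=
    Finset.expect_comm _ _ _
  have swap₂₃ (ψ : V → V → V → ℝ) : 𝔼 p, 𝔼 q, 𝔼 r, ψ p r q = 𝔼 p, 𝔼 q, 𝔼 r, ψ p q r :=
    Finset.expect_congr rfl fun _ _ => Finset.expect_comm _ _ _
  simp only [Finset.expect_add_distrib]
  linarith [swap₁₂ φ, swap₂₃ φ, swap₁₂ fun p q r => φ p r q, swap₂₃ fun p q r => φ q p r,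
    swap₁₂ fun p q r => φ q r p, swap₂₃ fun p q r => φ r p q, swap₂₃ fun p q r => φ q r p,
    swap₁₂ fun p q r => φ r p q]

lemma exists_le_expect_slice [Nonempty V] {c : ℝ} {φ : V → V → V → V → ℝ}
    (h : c ≤ 𝔼 x, 𝔼 y, 𝔼 d, 𝔼 e, φ x y d e) : ∃ y e, c ≤ 𝔼 x, 𝔼 d, φ x y d e := by
  rw [Finset.expect_comm] at h
  obtain ⟨y, hy⟩ := exists_le_of_le_expect h
  have h_swap : 𝔼 x, 𝔼 d, 𝔼 e, φ x y d e = 𝔼 e, 𝔼 x, 𝔼 d, φ x y d e :=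
    (Finset.expect_congr rfl fun x _ => Finset.expect_comm _ _ _).trans (Finset.expect_comm _ _ _)
  exact ⟨y, exists_le_of_le_expect (hy.trans_eq h_swap)⟩

lemma exists_le_expect_slice_or [Nonempty V] {c : ℝ} {K P Q : V → V → V → V → Prop}
    (h : 2 * c ≤ 𝔼 x, 𝔼 y, 𝔼 d, 𝔼 e, iverson (K x y d e))
    (hK : ∀ x y d e, K x y d e → P x y d e ∨ Q x y d e) :
    (∃ y e, c ≤ 𝔼 x, 𝔼 d, iverson (P x y d e)) ∨ ∃ d e, c ≤ 𝔼 x, 𝔼 y, iverson (Q x y d e) := by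
  have h_sum : 2 * c ≤ (𝔼 x, 𝔼 y, 𝔼 d, 𝔼 e, iverson (P x y d e)) +
      𝔼 x, 𝔼 d, 𝔼 y, 𝔼 e, iverson (Q x y d e) := by
    rw [Finset.expect_congr rfl fun x _ => Finset.expect_comm _ _ fun d y =>
      𝔼 e, iverson (Q x y d e)]
    simp only [← Finset.expect_add_distrib]
    exact h.trans <| expect_mono fun x => expect_mono fun y => expect_mono fun d =>
      expect_mono fun e => (iverson_mono (hK x y d e)).trans iverson_or_le
  rcases le_or_gt c (𝔼 x, 𝔼 y, 𝔼 d, 𝔼 e, iverson (P x y d e)) with hP | hP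
  · exact .inl (exists_le_expect_slice hP)
  · exact .inr (exists_le_expect_slice (φ := fun x d y e => iverson (Q x y d e)) (by linarith))

/-- The density of intersecting pairs of members of two families of sets. -/
noncomputable def meetDensity {α : Type*} (R S : V → Set α) : ℝ :=
  𝔼 p, 𝔼 q, iverson (R p ∩ S q).Nonempty

section FirstVisit

variable {α : Type*} {f : ℕ → α} {D : V → Set α} {τ : ℝ}

lemma expect_iverson_hittingTime_mem_le (hτ : 0 ≤ τ) (hdeg : ∀ w, 𝔼 v, iverson (w ∈ D v) ≤ τ)
    (S : Set α) : 𝔼 v, iverson (∃ t : ℕ, hittingTime f S = t ∧ f t ∈ D v) ≤ τ := by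
  by_cases h : ∃ t : ℕ, hittingTime f S = t
  · obtain ⟨t, ht⟩ := h
    refine (expect_mono fun v => iverson_mono ?_).trans (hdeg (f t))
    rintro ⟨s, hs, hsv⟩
    rwa [← Nat.cast_inj.1 (hs.symm.trans ht)]
  · have hfalse (v : V) : ¬ ∃ t : ℕ, hittingTime f S = t ∧ f t ∈ D v :=
      fun ⟨t, ht, _⟩ => h ⟨t, ht⟩
    simp only [iverson_of_false (hfalse _), Finset.expect_const_zero, hτ]

/-- Since few members of `D` contain any given point, the pairs of `K` with equal hitting times are
rare, and by symmetry half of the remaining ones come in either order. -/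
lemma expect_iverson_le_of_hittingTime [Nonempty V] (hdeg : ∀ w, 𝔼 v, iverson (w ∈ D v) ≤ τ)
    {K L : V → V → Prop} (hit : ∀ x u, K x u → ∃ i, f i ∈ D x)
    (hlt : ∀ x u, K x u → hittingTime f (D x) < hittingTime f (D u) → L x u)
    (hgt : ∀ x u, K x u → hittingTime f (D u) < hittingTime f (D x) → L u x) :
    𝔼 x, 𝔼 u, iverson (K x u) ≤ 2 * 𝔼 x, 𝔼 u, iverson (L x u) + τ := by
  have hτ : 0 ≤ τ := (expect_nonneg fun _ => iverson_nonneg).trans (hdeg (f 0))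
  have h_tri (x u : V) : iverson (K x u) ≤ iverson (L x u) + iverson (L u x) +
      iverson (∃ t : ℕ, hittingTime f (D x) = t ∧ f t ∈ D u) := by
    refine (iverson_mono (q := (L x u ∨ L u x) ∨ ∃ t : ℕ, _) fun hK => ?_).trans
      (iverson_or_le.trans (add_le_add_left iverson_or_le _))
    rcases hittingTime_lt_or_lt_or_mem (hit x u hK) (D u) with h | h | ⟨t, ht, -, htu⟩
    exacts [.inl (.inl (hlt x u hK h)), .inl (.inr (hgt x u hK h)), .inr ⟨t, ht, htu⟩]
  calc 𝔼 x, 𝔼 u, iverson (K x u)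
      ≤ 𝔼 x, (𝔼 u, iverson (L x u) + 𝔼 u, iverson (L u x) + τ) := by
        refine expect_mono fun x => (expect_mono (h_tri x)).trans ?_
        simp only [Finset.expect_add_distrib]
        grw [expect_iverson_hittingTime_mem_le hτ hdeg]
    _ = 2 * 𝔼 x, 𝔼 u, iverson (L x u) + τ := by
        rw [Finset.expect_add_distrib, Finset.expect_add_distrib, Fintype.expect_const,
          Finset.expect_comm _ _ fun x u => iverson (L u x), two_mul]

end FirstVisit

end Average

/-! ### Strands and their prefixes -/

section Strands

variable {V α : Type*} {H : SimpleGraph α} {I : V → Set α} {z : Set α}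

/-- A connected set outside `z` that touches `z`. -/
structure IsBranch (H : SimpleGraph α) (z S : Set α) : Prop where
  preconnected : (H.induce S).Preconnected
  disjoint : Disjoint S z
  touches : Touches H z S

/-- A family of regions outside `z`, the `v`-th one inside `I v` and either empty or traversed by a
lazy walk. Regions rather than a subset of `V` record which indices still take part. -/
structure Strands (H : SimpleGraph α) (I : V → Set α) (z : Set α) where
  walk : V → ℕ → α
  region : V → Set α
  isLazyWalk v : IsLazyWalk H (walk v)
  range_walk v : (region v).Nonempty → Set.range (walk v) = region v
  region_subset v : region v ⊆ I v
  disjoint_region v : Disjoint (region v) z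

/-- The walks of the nonempty strands start next to `z`. -/
def Strands.Rooted (F : Strands H I z) : Prop :=
  ∀ v, (F.region v).Nonempty → Touches H z {F.walk v 0}

/-- The strands satisfying `P`. -/
def Strands.filter (F : Strands H I z) (P : V → Prop) : Strands H I z where
  walk := F.walk
  region v := {w ∈ F.region v | P v}
  isLazyWalk := F.isLazyWalk
  range_walk v h := (F.range_walk v (h.mono (Set.sep_subset _ _))).trans
    (Set.sep_eq_self_iff_mem_true.2 fun _ _ => h.some_mem.2).symm
  region_subset v := (Set.sep_subset _ _).trans (F.region_subset v)
  disjoint_region v := (F.disjoint_region v).mono_left (Set.sep_subset _ _)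

/-- The strands disjoint from `z'`. -/
def Strands.avoid {z : Set α} (F : Strands H I z) (z' : Set α) : Strands H I z' where
  walk := F.walk
  region := (F.filter fun v => Disjoint (F.region v) z').region
  isLazyWalk := F.isLazyWalk
  range_walk := (F.filter _).range_walk
  region_subset := (F.filter _).region_subset
  disjoint_region _ := Set.disjoint_left.2 fun _ hw => Set.disjoint_left.1 hw.2 hw.1

lemma Strands.exists_walk_before (F : Strands H I z) (S : Set α) (v : V) :
    ∃ g, IsLazyWalk H g ∧ g 0 = F.walk v 0 ∧
      ((F.region v ∩ prefixBefore (F.walk v) S).Nonempty →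
        Set.range g = F.region v ∩ prefixBefore (F.walk v) S) := by
  by_cases h : (F.region v ∩ prefixBefore (F.walk v) S).Nonempty
  · obtain ⟨g, hg, hg0, hrange⟩ := (F.isLazyWalk v).exists_range_eq_prefixBefore
      (zero_notMem_of_prefixBefore_nonempty (h.mono Set.inter_subset_right))
    refine ⟨g, hg, hg0, fun _ => hrange.trans (Set.inter_eq_right.2 ?_).symm⟩
    exact F.range_walk v (h.mono Set.inter_subset_left) ▸ prefixBefore_subset_range
  · exact ⟨F.walk v, F.isLazyWalk v, rfl, fun h' => absurd h' h⟩

/-- The strands cut off at their first visit to `S`. -/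
noncomputable def Strands.before (F : Strands H I z) (S : Set α) : Strands H I z where
  walk v := (F.exists_walk_before S v).choose
  region v := F.region v ∩ prefixBefore (F.walk v) S
  isLazyWalk v := (F.exists_walk_before S v).choose_spec.1
  range_walk v := (F.exists_walk_before S v).choose_spec.2.2
  region_subset v := Set.inter_subset_left.trans (F.region_subset v)
  disjoint_region v := (F.disjoint_region v).mono_left Set.inter_subset_left

/-- The strands meeting `S`, cut off at their first visit to it. -/
noncomputable def Strands.truncate (F : Strands H I z) (S : Set α) : Strands H I z :=
  (F.before S).filter fun v => (F.region v ∩ S).Nonempty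

lemma Strands.exists_walk_reverse (F : Strands H I z) (S : Set α) (v : V) :
    ∃ g, IsLazyWalk H g ∧ (((F.truncate S).region v).Nonempty →
      Touches H S {g 0} ∧ Set.range g = (F.truncate S).region v) := by
  by_cases h : ((F.truncate S).region v).Nonempty
  · obtain ⟨w, ⟨hwF, hw⟩, w', hw'F, hw'⟩ := h
    have hwalk := F.range_walk v ⟨w, hwF⟩
    obtain ⟨i, rfl⟩ := hwalk.symm ▸ hw'F
    obtain ⟨g, hg, htouch, hrange⟩ := (F.isLazyWalk v).exists_range_eq_prefixBefore_touching
      (zero_notMem_of_prefixBefore_nonempty ⟨w, hw⟩) ⟨i, hw'⟩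
    refine ⟨g, hg, fun _ => ⟨htouch, hrange.trans ?_⟩⟩
    ext x
    exact ⟨fun hx => ⟨⟨hwalk ▸ prefixBefore_subset_range hx, hx⟩, _, hw'F, hw'⟩, fun hx => hx.1.2⟩
  · exact ⟨F.walk v, F.isLazyWalk v, fun h' => absurd h' h⟩

/-- The strands cut off at their first visit to `S` and traversed backwards from there. -/
noncomputable def Strands.reverse (F : Strands H I z) (S : Set α) : Strands H I S where
  walk v := (F.exists_walk_reverse S v).choose
  region := (F.truncate S).region
  isLazyWalk v := (F.exists_walk_reverse S v).choose_spec.1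
  range_walk v h := ((F.exists_walk_reverse S v).choose_spec.2 h).2
  region_subset := (F.truncate S).region_subset
  disjoint_region _ := disjoint_prefixBefore.mono_left fun _ hw => hw.1.2

variable {F : Strands H I z} {S T : Set α} {v : V}

lemma Strands.rooted_reverse : (F.reverse S).Rooted :=
  fun v h => ((F.exists_walk_reverse S v).choose_spec.2 h).1

lemma Strands.Rooted.filter {P : V → Prop} (hF : F.Rooted) : (F.filter P).Rooted :=
  fun v h => hF v (h.mono (Set.sep_subset _ _))

lemma Strands.Rooted.before (hF : F.Rooted) : (F.before S).Rooted := by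
  intro v h
  have h_start : (F.before S).walk v 0 = F.walk v 0 :=
    (F.exists_walk_before S v).choose_spec.2.1
  rw [h_start]
  exact hF v (h.mono Set.inter_subset_left)

lemma Strands.Rooted.truncate (hF : F.Rooted) : (F.truncate S).Rooted :=
  hF.before.filter

lemma Strands.preconnected_region (F : Strands H I z) (v : V) :
    (H.induce (F.region v)).Preconnected := by
  rcases (F.region v).eq_empty_or_nonempty with h | h
  · rw [h]
    exact fun x => x.2.elim
  · exact F.range_walk v h ▸ (F.isLazyWalk v).preconnected_range

lemma Strands.exists_walk_mem (h : (F.region v ∩ S).Nonempty) : ∃ i, F.walk v i ∈ S := by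
  obtain ⟨w, hw, hwS⟩ := h
  obtain ⟨i, rfl⟩ := (F.range_walk v ⟨w, hw⟩).symm ▸ hw
  exact ⟨i, hwS⟩

lemma Strands.walk_mem_region (h : (F.region v).Nonempty) (i : ℕ) : F.walk v i ∈ F.region v :=
  F.range_walk v h ▸ Set.mem_range_self i

lemma Strands.Rooted.isBranch (hF : F.Rooted) (h : (F.region v).Nonempty) :
    IsBranch H z (F.region v) where
  preconnected := F.preconnected_region v
  disjoint := F.disjoint_region v
  touches := (hF v h).mono subset_rfl (Set.singleton_subset_iff.2 (F.walk_mem_region h 0))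

lemma Strands.region_before_subset : (F.before S).region v ⊆ F.region v :=
  Set.inter_subset_left

lemma Strands.region_before (h : (F.region v).Nonempty) :
    (F.before S).region v = prefixBefore (F.walk v) S :=
  Set.inter_eq_right.2 (F.range_walk v h ▸ prefixBefore_subset_range)

lemma Strands.region_truncate (h : (F.region v ∩ S).Nonempty) :
    (F.truncate S).region v = prefixBefore (F.walk v) S :=
  (Set.sep_eq_self_iff_mem_true.2 fun _ _ => h).trans
    (Strands.region_before (h.mono Set.inter_subset_left))

lemma Strands.disjoint_region_truncate : Disjoint ((F.truncate S).region v) S :=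
  disjoint_prefixBefore.mono_left fun _ hw => hw.1.2

lemma Strands.region_inter_nonempty_of_truncate (h : ((F.truncate S).region v).Nonempty) :
    (F.region v ∩ S).Nonempty :=
  h.some_mem.2

lemma Strands.hittingTime_lt_iff (h : (F.region v).Nonempty) :
    hittingTime (F.walk v) S < hittingTime (F.walk v) T ↔
      ((F.before T).region v ∩ S).Nonempty := by
  rw [hittingTime_lt_iff_prefixBefore, Strands.region_before h]

lemma Strands.region_truncate_inter_nonempty (h : (F.region v ∩ S).Nonempty)
    (hlt : hittingTime (F.walk v) T < hittingTime (F.walk v) S) :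
    ((F.truncate S).region v ∩ T).Nonempty := by
  rw [Strands.region_truncate h]
  exact hittingTime_lt_iff_prefixBefore.1 hlt

end Strands

/-! ### Chord systems -/

section ChordSystem

variable {V α : Type*} {H : SimpleGraph α} {I : V → Set α} {z : Set α}

/-- Two disjoint poles attached to a hub, a family of chords joining the poles outside the hub, and
a family of branches attached to the hub away from the poles. Chords and branches of indices that
do not take part are empty. -/
structure ChordSystem (H : SimpleGraph α) (I : V → Set α) where
  hub : Set α
  pole₁ : Set α
  pole₂ : Set α
  chord : V → Set α
  branch : V → Set α
  preconnected_hub : (H.induce hub).Preconnected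
  isBranch_pole₁ : IsBranch H hub pole₁
  isBranch_pole₂ : IsBranch H hub pole₂
  disjoint_poles : Disjoint pole₁ pole₂
  chord_subset i : chord i ⊆ I i
  preconnected_chord i : (H.induce (chord i)).Preconnected
  disjoint_chord_hub i : Disjoint (chord i) hub
  disjoint_chord_pole₁ i : Disjoint (chord i) pole₁
  disjoint_chord_pole₂ i : Disjoint (chord i) pole₂
  touches_chord_pole₁ i : (chord i).Nonempty → Touches H (chord i) pole₁
  touches_chord_pole₂ i : (chord i).Nonempty → Touches H (chord i) pole₂
  branch_subset j : branch j ⊆ I j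
  isBranch_branch j : (branch j).Nonempty → IsBranch H hub (branch j)
  disjoint_branch_pole₁ j : Disjoint (branch j) pole₁
  disjoint_branch_pole₂ j : Disjoint (branch j) pole₂

/-- The sets `P`, `Q`, `R` are pairwise disjoint and `Q` meets the chord of `f` from `P` to `R`. -/
def ChordMeets (f : ℕ → α) (P Q R : Set α) : Prop :=
  (chord f P R ∩ Q).Nonempty ∧ Disjoint Q P ∧ Disjoint Q R ∧ Disjoint P R

lemma chordMeets_of_hit {f : ℕ → α} {P Q R : Set α} (hP : ∃ i, f i ∈ P) (hQ : ∃ i, f i ∈ Q)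
    (hR : ∃ i, f i ∈ R) :
    ((P ∩ Q).Nonempty ∨ (P ∩ R).Nonempty ∨ (Q ∩ R).Nonempty) ∨
      ((((ChordMeets f P Q R ∨ ChordMeets f Q P R) ∨ ChordMeets f P R Q) ∨ ChordMeets f R P Q) ∨
        ChordMeets f Q R P) ∨ ChordMeets f R Q P := by
  simp only [← Set.not_disjoint_iff_nonempty_inter]
  by_cases h : Disjoint P Q ∧ Disjoint P R ∧ Disjoint Q R
  · obtain ⟨hPQ, hPR, hQR⟩ := h
    have h_chord := exists_chord_inter_nonempty hP hQ hR hPQ hPR hQR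
    simp only [ChordMeets, hPQ, hPR, hQR, hPQ.symm, hPR.symm, hQR.symm, and_true]
    tauto
  · tauto

variable [Fintype V]

/-- The branches disjoint from both poles and the parts of the `X`-strands between the poles. -/
lemma Strands.Rooted.exists_chordSystem [Nonempty V] {B X : Strands H I z} (hB : B.Rooted)
    (hz : (H.induce z).Preconnected) {S T : Set α} (hS : S.Nonempty → IsBranch H z S)
    (hT : T.Nonempty → IsBranch H z T) {ρ : ℝ} (hρ : 0 < ρ)
    (h : ρ ≤ 𝔼 i, 𝔼 j, iverson
      ((X.region i).Nonempty ∧ ChordMeets (X.walk i) S (B.region j) T)) :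
    ∃ C : ChordSystem H I, ρ ≤ meetDensity C.chord C.branch := by
  obtain ⟨i₀, hi₀⟩ := exists_le_of_le_expect h
  obtain ⟨j₀, hj₀⟩ := exists_le_of_le_expect hi₀
  obtain ⟨-, hne, -, -, hST⟩ := of_iverson_pos (hρ.trans_le hj₀)
  have hne := hne.mono Set.inter_subset_left
  have h_chord (i : V) (h : (X.region i ∩ chord (X.walk i) S T).Nonempty) :
      X.region i ∩ chord (X.walk i) S T = chord (X.walk i) S T :=
    Set.inter_eq_right.2
      (chord_subset_range.trans_eq (X.range_walk i (h.mono Set.inter_subset_left)))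
  refine ⟨{
    hub := z, pole₁ := S, pole₂ := T
    chord i := X.region i ∩ chord (X.walk i) S T
    branch := (B.filter fun j => Disjoint (B.region j) S ∧ Disjoint (B.region j) T).region
    preconnected_hub := hz
    isBranch_pole₁ := hS ((X.isLazyWalk i₀).touches_chord_left hne).symm.nonempty_left
    isBranch_pole₂ := hT ((X.isLazyWalk i₀).touches_chord_right hne).symm.nonempty_left
    disjoint_poles := hST
    chord_subset i := Set.inter_subset_left.trans (X.region_subset i)
    preconnected_chord i := ?_
    disjoint_chord_hub i := (X.disjoint_region i).mono_left Set.inter_subset_left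
    disjoint_chord_pole₁ i := disjoint_chord_left.mono_left Set.inter_subset_right
    disjoint_chord_pole₂ i := disjoint_chord_right.mono_left Set.inter_subset_right
    touches_chord_pole₁ i hi := by
      rw [h_chord i hi]
      exact (X.isLazyWalk i).touches_chord_left (hi.mono Set.inter_subset_right)
    touches_chord_pole₂ i hi := by
      rw [h_chord i hi]
      exact (X.isLazyWalk i).touches_chord_right (hi.mono Set.inter_subset_right)
    branch_subset := Strands.region_subset _
    isBranch_branch j hj := hB.filter.isBranch hj
    disjoint_branch_pole₁ j := Set.disjoint_left.2 fun _ hw => Set.disjoint_left.1 hw.2.1 hw.1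
    disjoint_branch_pole₂ j := Set.disjoint_left.2 fun _ hw => Set.disjoint_left.1 hw.2.2 hw.1
    }, h.trans (expect_mono fun i => expect_mono fun j => iverson_mono ?_)⟩
  · rcases (X.region i ∩ chord (X.walk i) S T).eq_empty_or_nonempty with hi | hi
    · exact hi ▸ fun x => x.2.elim
    · rw [h_chord i hi]
      exact (X.isLazyWalk i).preconnected_chord
  · rintro ⟨hi, ⟨w, hw, hwB⟩, hS, hT, -⟩
    exact ⟨w, ⟨X.range_walk i hi ▸ chord_subset_range hw, hw⟩, hwB, hS, hT⟩

lemma expect_iverson_hit_three_le [Nonempty V] (f : ℕ → α) (B : V → Set α) :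
    𝔼 p, 𝔼 q, 𝔼 r, iverson ((∃ i, f i ∈ B p) ∧ (∃ i, f i ∈ B q) ∧ ∃ i, f i ∈ B r) ≤
      3 * meetDensity B B + 6 * 𝔼 p, 𝔼 q, 𝔼 r, iverson (ChordMeets f (B p) (B q) (B r)) := by
  let φ (p q r : V) : ℝ := iverson (ChordMeets f (B p) (B q) (B r))
  have h_split (p q r : V) :
      iverson ((∃ i, f i ∈ B p) ∧ (∃ i, f i ∈ B q) ∧ ∃ i, f i ∈ B r) ≤
        iverson (B p ∩ B q).Nonempty + iverson (B p ∩ B r).Nonempty + iverson (B q ∩ B r).Nonempty +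
          (φ p q r + φ q p r + φ p r q + φ r p q + φ q r p + φ r q p) := by
    simp only [φ]
    grw [← iverson_or_le, ← iverson_or_le, ← iverson_or_le, ← iverson_or_le, ← iverson_or_le,
      ← iverson_or_le, ← iverson_or_le, ← iverson_or_le]
    exact iverson_mono fun ⟨hp, hq, hr⟩ => (chordMeets_of_hit hp hq hr).imp_left or_assoc.2
  refine (expect_mono fun p => expect_mono fun q => expect_mono fun r => h_split p q r).trans_eq ?_
  rw [← expect_sum_orders φ]
  simp only [Finset.expect_add_distrib, Fintype.expect_const, meetDensity]
  ring

lemma Strands.expect_iverson_meet_three_le [Nonempty V] (X : Strands H I z) (B : V → Set α)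
    (x : V) :
    𝔼 p, 𝔼 q, 𝔼 r, iverson ((B p ∩ X.region x).Nonempty ∧ (B q ∩ X.region x).Nonempty ∧
        (B r ∩ X.region x).Nonempty) ≤
      3 * meetDensity B B + 6 * 𝔼 p, 𝔼 q, 𝔼 r,
        iverson ((X.region x).Nonempty ∧ ChordMeets (X.walk x) (B p) (B q) (B r)) := by
  rcases (X.region x).eq_empty_or_nonempty with hx | hx
  · simp only [hx, Set.inter_empty, Set.not_nonempty_empty, false_and, iverson_of_false not_false,
      Finset.expect_const_zero, mul_zero, add_zero]
    exact mul_nonneg zero_le_three (expect_nonneg fun _ => expect_nonneg fun _ => iverson_nonneg)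
  · simp only [hx, true_and]
    grw [← expect_iverson_hit_three_le]
    have hit {v : V} (h : (B v ∩ X.region x).Nonempty) :=
      Strands.exists_walk_mem (Set.inter_comm _ _ ▸ h)
    refine expect_mono fun p => expect_mono fun q => expect_mono fun r => iverson_mono ?_
    exact fun ⟨hp, hq, hr⟩ => ⟨hit hp, hit hq, hit hr⟩

lemma Strands.Rooted.exists_chordSystem_of_meetDensity [Nonempty V] {B X : Strands H I z}
    (hB : B.Rooted) (hz : (H.induce z).Preconnected) {θ : ℝ} (hθ : 0 < θ)
    (h : θ ≤ meetDensity B.region X.region) :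
    θ ^ 3 / 6 ≤ meetDensity B.region B.region ∨
      ∃ C : ChordSystem H I, θ ^ 3 / 12 ≤ meetDensity C.chord C.branch := by
  refine or_iff_not_imp_left.2 fun h_rare => ?_
  let φ (x p q r : V) : ℝ := iverson ((X.region x).Nonempty ∧
    ChordMeets (X.walk x) (B.region p) (B.region q) (B.region r))
  have h_cube : θ ^ 3 ≤ 𝔼 x, 𝔼 p, 𝔼 q, 𝔼 r, iverson ((B.region p ∩ X.region x).Nonempty ∧
      (B.region q ∩ X.region x).Nonempty ∧ (B.region r ∩ X.region x).Nonempty) :=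
    cube_le_expect_iverson_and hθ.le (h.trans_eq (Finset.expect_comm _ _ _))
  have h_density : θ ^ 3 / 12 ≤ 𝔼 x, 𝔼 p, 𝔼 q, 𝔼 r, φ x p q r := by
    have := h_cube.trans (expect_mono (X.expect_iverson_meet_three_le B.region))
    rw [Finset.expect_add_distrib, Fintype.expect_const, ← Finset.mul_expect] at this
    rw [not_le] at h_rare
    linarith
  obtain ⟨p, hp⟩ : ∃ p, θ ^ 3 / 12 ≤ 𝔼 x, 𝔼 q, 𝔼 r, φ x p q r :=
    exists_le_of_le_expect (h_density.trans_eq (Finset.expect_comm _ _ _))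
  obtain ⟨r, hr⟩ : ∃ r, θ ^ 3 / 12 ≤ 𝔼 x, 𝔼 q, φ x p q r := by
    refine exists_le_of_le_expect (hp.trans_eq (Eq.trans ?_ (Finset.expect_comm _ _ _)))
    exact Finset.expect_congr rfl fun x _ => Finset.expect_comm _ _ _
  exact hB.exists_chordSystem hz hB.isBranch hB.isBranch
    (by positivity) hr

section Truncation

variable [Nonempty V] {τ ρ : ℝ}

lemma Strands.le_expect_meetDensity_truncate (A : Strands H I z) {D : V → Set α}
    (hdeg : ∀ w, 𝔼 v, iverson (w ∈ D v) ≤ τ) (hρ : 0 ≤ ρ) (hτ : τ ≤ ρ ^ 2 / 3)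
    (h : ρ ≤ meetDensity A.region D) :
    ρ ^ 2 / 3 ≤ 𝔼 u, meetDensity (A.truncate (D u)).region D := by
  have h_order (p : V) :
      𝔼 x, 𝔼 u, iverson ((A.region p ∩ D x).Nonempty ∧ (A.region p ∩ D u).Nonempty) ≤
        2 * (𝔼 x, 𝔼 u, iverson ((A.truncate (D u)).region p ∩ D x).Nonempty) + τ :=
    expect_iverson_le_of_hittingTime (f := A.walk p) hdeg
      (fun _ _ hp => Strands.exists_walk_mem hp.1)
      (fun _ _ hp hlt => Strands.region_truncate_inter_nonempty hp.2 hlt)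
      (fun _ _ hp hgt => Strands.region_truncate_inter_nonempty hp.1 hgt)
  have h_pairs := (sq_le_expect_iverson_and hρ h).trans (expect_mono h_order)
  rw [Finset.expect_add_distrib, Fintype.expect_const, ← Finset.mul_expect] at h_pairs
  have h_swap : 𝔼 p, 𝔼 x, 𝔼 u, iverson ((A.truncate (D u)).region p ∩ D x).Nonempty =
      𝔼 u, meetDensity (A.truncate (D u)).region D :=
    (Finset.expect_congr rfl fun p _ => Finset.expect_comm _ _ _).trans (Finset.expect_comm _ _ _)
  linarith

/-- Cut the `A`-strands off at a suitable `X u`; if the pieces rarely meet each other, then three of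
them meeting the same `X`-strand typically form two poles and a branch between them. -/
lemma Strands.Rooted.exists_chordSystem_or_truncate {A X : Strands H I z} (hA : A.Rooted)
    (hz : (H.induce z).Preconnected) (hdeg : ∀ w, 𝔼 v, iverson (w ∈ I v) ≤ τ) (hρ : 0 < ρ)
    (hρ' : ρ ≤ 1 / 2) (hτ : τ ≤ ρ ^ 2 / 3) (h : ρ ≤ meetDensity A.region X.region) :
    (∃ C : ChordSystem H I, ρ ^ 15 ≤ meetDensity C.chord C.branch) ∨
      ∃ u, ρ ^ 15 ≤
        meetDensity (A.truncate (X.region u)).region (A.truncate (X.region u)).region := by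
  have hdegX (w : α) : 𝔼 v, iverson (w ∈ X.region v) ≤ τ :=
    (expect_mono fun v => iverson_mono fun hw => X.region_subset v hw).trans (hdeg w)
  obtain ⟨u, hu⟩ := exists_le_of_le_expect (A.le_expect_meetDensity_truncate hdegX hρ.le hτ h)
  have hpow : ρ ^ 15 ≤ (ρ ^ 2 / 3) ^ 3 / 12 := by
    have : ρ ^ 9 ≤ (1 / 2) ^ 9 := pow_le_pow_left₀ hρ.le hρ' 9
    nlinarith [pow_pos hρ 6]
  have hcube : 0 < (ρ ^ 2 / 3) ^ 3 := by positivity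
  rcases hA.truncate.exists_chordSystem_of_meetDensity hz (by positivity) hu with hB | ⟨C, hC⟩
  · exact .inr ⟨u, by linarith⟩
  · exact .inl ⟨C, hpow.trans hC⟩

end Truncation

section Cherry

variable [Nonempty V] {τ ρ : ℝ} (F : Strands H I z)

/-- The cherry `x`, `d` on the strand `y` cut off at its first visit to `e`: the piece meets `x`,
which meets `d`, which misses the piece. -/
def Strands.IsCherry (x y d e : V) : Prop :=
  ((F.before (F.region e)).region y ∩ F.region x).Nonempty ∧ (F.region x ∩ F.region d).Nonempty ∧
    Disjoint ((F.before (F.region e)).region y) (F.region d)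

lemma Strands.sq_div_three_le_expect_iverson_ordered (hdeg : ∀ w, 𝔼 v, iverson (w ∈ I v) ≤ τ)
    (hρ : 0 ≤ ρ) (hτ : τ ≤ ρ ^ 2 / 3) (h : ρ ≤ meetDensity F.region F.region) :
    ρ ^ 2 / 3 ≤ 𝔼 x, 𝔼 y, 𝔼 d, iverson ((F.region y ∩ F.region x).Nonempty ∧
      (F.region x ∩ F.region d).Nonempty ∧
      hittingTime (F.walk y) (F.region x) < hittingTime (F.walk y) (F.region d)) := by
  have hdegF (w : α) : 𝔼 v, iverson (w ∈ F.region v) ≤ τ :=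
    (expect_mono fun v => iverson_mono fun hw => F.region_subset v hw).trans (hdeg w)
  have h_order (y : V) := expect_iverson_le_of_hittingTime (f := F.walk y) hdegF
    (K := fun x d => (F.region x ∩ F.region y).Nonempty ∧ (F.region x ∩ F.region d).Nonempty)
    (L := fun x d => (F.region y ∩ F.region x).Nonempty ∧ (F.region x ∩ F.region d).Nonempty ∧
      hittingTime (F.walk y) (F.region x) < hittingTime (F.walk y) (F.region d))
    (fun x d hK => Strands.exists_walk_mem (Set.inter_comm _ _ ▸ hK.1))
    (fun x d hK hlt => ⟨Set.inter_comm _ _ ▸ hK.1, hK.2, hlt⟩)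
    (fun x d hK hgt => ⟨((Strands.hittingTime_lt_iff hK.1.right).1 hgt).mono
      (Set.inter_subset_inter_left _ Strands.region_before_subset), Set.inter_comm _ _ ▸ hK.2, hgt⟩)
  have h_pairs := sq_le_expect_iverson_and hρ h
  rw [Finset.expect_comm] at h_pairs ⊢
  have := h_pairs.trans (expect_mono h_order)
  rw [Finset.expect_add_distrib, Fintype.expect_const, ← Finset.mul_expect] at this
  linarith

lemma Strands.pow_ten_le_expect_iverson_isCherry (hdeg : ∀ w, 𝔼 v, iverson (w ∈ I v) ≤ τ)
    (hρ : 0 ≤ ρ) (hρ' : ρ ≤ 1 / 2) (hτ : τ ≤ ρ ^ 2 / 3) (h : ρ ≤ meetDensity F.region F.region) :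
    ρ ^ 10 ≤ 𝔼 x, 𝔼 y, 𝔼 d, 𝔼 e, iverson (F.IsCherry x y d e) := by
  let η := ρ ^ 2 / 6
  have h_guard (x y : V) := mul_sub_le_expect_iverson_rank (η := η)
    (fun v => hittingTime (F.walk y) (F.region v)) (hittingTime (F.walk y) (F.region x))
    (P := fun d => (F.region y ∩ F.region x).Nonempty ∧ (F.region x ∩ F.region d).Nonempty ∧
      hittingTime (F.walk y) (F.region x) < hittingTime (F.walk y) (F.region d))
    (fun _ hd => hd.2.2) (by positivity)
  have h_ordered := F.sq_div_three_le_expect_iverson_ordered hdeg hρ hτ h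
  have h_expect := expect_mono fun x => expect_mono (h_guard x)
  simp only [← Finset.mul_expect, Finset.expect_sub_distrib, Fintype.expect_const] at h_expect
  have hpow : ρ ^ 10 ≤ η * (ρ ^ 2 / 3 - η) := by
    have : ρ ^ 6 ≤ (1 / 2) ^ 6 := pow_le_pow_left₀ hρ hρ' 6
    have : 0 ≤ ρ ^ 4 := by positivity
    simp only [η]
    nlinarith
  have h_mul : η * (ρ ^ 2 / 3 - η) ≤ _ := (mul_le_mul_of_nonneg_left (sub_le_sub_right h_ordered η)
    (by positivity)).trans h_expect
  refine hpow.trans (h_mul.trans (expect_mono fun x => expect_mono fun y => expect_mono fun d =>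
    expect_mono fun e => iverson_mono ?_))
  rintro ⟨⟨hyx, hxd, -⟩, hxe, hed⟩
  have hy := hyx.mono Set.inter_subset_left
  refine ⟨(Strands.hittingTime_lt_iff hy).1 hxe, hxd, ?_⟩
  by_contra hd
  rw [Set.not_disjoint_iff_nonempty_inter, ← Strands.hittingTime_lt_iff hy] at hd
  exact hd.not_ge hed

end Cherry

section Existence

variable [Nonempty V] {τ ρ : ℝ}

lemma two_mul_pow_eleven_le (hρ : 0 ≤ ρ) (hρ' : ρ ≤ 1 / 2) : 2 * ρ ^ 11 ≤ ρ ^ 10 := by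
  rw [pow_succ]
  nlinarith [pow_nonneg hρ 10]

/-- The strand `x` of a cherry visits the piece of `y` and the region `d` in some order; the one it
visits later serves as the root. -/
lemma Strands.exists_rooted (F : Strands H I z) (hdeg : ∀ w, 𝔼 v, iverson (w ∈ I v) ≤ τ)
    (hρ : 0 ≤ ρ) (hρ' : ρ ≤ 1 / 2) (hτ : τ ≤ ρ ^ 2 / 3) (h : ρ ≤ meetDensity F.region F.region) :
    ∃ (z' : Set α) (A X : Strands H I z'), (H.induce z').Preconnected ∧ A.Rooted ∧
      ρ ^ 11 ≤ meetDensity A.region X.region := by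
  let Y (y e : V) : Set α := (F.before (F.region e)).region y
  have h_split (x y d e : V) (h : F.IsCherry x y d e) :
      ((F.reverse (Y y e)).region x ∩ (F.avoid (Y y e)).region d).Nonempty ∨
        ((F.reverse (F.region d)).region x ∩
          ((F.before (F.region e)).avoid (F.region d)).region y).Nonempty := by
    obtain ⟨hyx, hxd, hyd⟩ := h
    have hxy : (F.region x ∩ Y y e).Nonempty := Set.inter_comm _ _ ▸ hyx
    rcases hittingTime_lt_or_lt_or_mem (Strands.exists_walk_mem hxy) (F.region d)
      with hlt | hgt | ⟨t, -, hY, hd⟩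
    · obtain ⟨w, hw, hwY⟩ := Strands.region_truncate_inter_nonempty hxd hlt
      exact .inr ⟨w, hw, hwY, hyd⟩
    · obtain ⟨w, hw, hwd⟩ := Strands.region_truncate_inter_nonempty hxy hgt
      exact .inl ⟨w, hw, hwd, hyd.symm⟩
    · exact absurd hd (Set.disjoint_left.1 hyd hY)
  have h_cherry := F.pow_ten_le_expect_iverson_isCherry hdeg hρ hρ' hτ h
  rcases exists_le_expect_slice_or ((two_mul_pow_eleven_le hρ hρ').trans h_cherry)
    h_split with ⟨y, e, hye⟩ | ⟨d, e, hde⟩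
  · exact ⟨_, F.reverse (Y y e), F.avoid (Y y e), (F.before _).preconnected_region y,
      Strands.rooted_reverse, hye⟩
  · exact ⟨_, F.reverse (F.region d), (F.before (F.region e)).avoid (F.region d),
      F.preconnected_region d, Strands.rooted_reverse, hde⟩

/-- For a cherry of the strands cut off at strand `u`, the chord of `x` from the first of the two
sets it visits to strand `u` meets the second one. -/
lemma Strands.Rooted.exists_chordSystem_of_truncate {A : Strands H I z} (hA : A.Rooted)
    (hz : (H.induce z).Preconnected) (hdeg : ∀ w, 𝔼 v, iverson (w ∈ I v) ≤ τ) (hρ : 0 < ρ)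
    (hρ' : ρ ≤ 1 / 2) (hτ : τ ≤ ρ ^ 2 / 3) (u : V)
    (h : ρ ≤ meetDensity (A.truncate (A.region u)).region (A.truncate (A.region u)).region) :
    ∃ C : ChordSystem H I, ρ ^ 11 ≤ meetDensity C.chord C.branch := by
  let B := A.truncate (A.region u)
  let Y (y e : V) : Set α := (B.before (B.region e)).region y
  have hB : B.Rooted := hA.truncate
  have h_split (x y d e : V) (h : B.IsCherry x y d e) :
      ((A.region x).Nonempty ∧ ChordMeets (A.walk x) (Y y e) (B.region d) (A.region u)) ∨
        (A.region x).Nonempty ∧ ChordMeets (A.walk x) (B.region d) (Y y e) (A.region u) := by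
    obtain ⟨hyx, hxd, hyd⟩ := h
    have hxu := Strands.region_inter_nonempty_of_truncate hyx.right
    have hx : B.region x = prefixBefore (A.walk x) (A.region u) := Strands.region_truncate hxu
    have hd : Disjoint (B.region d) (A.region u) := Strands.disjoint_region_truncate
    have hy : Disjoint (Y y e) (A.region u) :=
      Strands.disjoint_region_truncate.mono_left Strands.region_before_subset
    have h_chord := exists_chord_inter_nonempty_of_prefix (Strands.exists_walk_mem hxu) hyd
      (hx ▸ Set.inter_comm _ _ ▸ hyx) (hx ▸ hxd)
    exact h_chord.imp (fun h => ⟨hxu.left, h, hyd.symm, hd, hy⟩)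
      fun h => ⟨hxu.left, h, hyd, hy, hd⟩
  have h_cherry := B.pow_ten_le_expect_iverson_isCherry hdeg hρ.le hρ' hτ h
  rcases exists_le_expect_slice_or ((two_mul_pow_eleven_le hρ.le hρ').trans h_cherry)
    h_split with ⟨y, e, hye⟩ | ⟨d, e, hde⟩
  · exact hB.exists_chordSystem hz hB.before.isBranch hA.isBranch (pow_pos hρ 11) hye
  · exact hB.before.exists_chordSystem hz hB.isBranch hA.isBranch (pow_pos hρ 11) hde

lemma Strands.exists_chordSystem (F : Strands H I z) (hdeg : ∀ w, 𝔼 v, iverson (w ∈ I v) ≤ τ)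
    (hρ : 0 < ρ) (hρ' : ρ ≤ 1 / 2) (hτ : τ ≤ ρ ^ 4950 / 3)
    (h : ρ ≤ meetDensity F.region F.region) :
    ∃ C : ChordSystem H I, ρ ^ 27225 ≤ meetDensity C.chord C.branch := by
  have hρ1 : ρ ≤ 1 := hρ'.trans (by norm_num)
  have h_half (k : ℕ) (hk : k ≠ 0) : ρ ^ k ≤ 1 / 2 :=
    (pow_le_of_le_one hρ.le hρ1 hk).trans hρ'
  have h_deg (k : ℕ) (hk : k * 2 ≤ 4950) : τ ≤ (ρ ^ k) ^ 2 / 3 := by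
    grw [hτ, ← pow_mul, pow_le_pow_of_le_one hρ.le hρ1 hk]
  have h_density {k : ℕ} (hk : k ≤ 27225) {C : ChordSystem H I}
      (hC : ρ ^ k ≤ meetDensity C.chord C.branch) : ρ ^ 27225 ≤ meetDensity C.chord C.branch :=
    (pow_le_pow_of_le_one hρ.le hρ1 hk).trans hC
  obtain ⟨z', A, X, hz, hA, hAX⟩ :=
    F.exists_rooted hdeg hρ.le hρ' (by simpa only [pow_one] using h_deg 1 (by norm_num)) h
  rcases hA.exists_chordSystem_or_truncate hz hdeg (pow_pos hρ 11) (h_half 11 (by norm_num))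
    (h_deg 11 (by norm_num)) hAX with ⟨C, hC⟩ | ⟨u, hu⟩
  · exact ⟨C, h_density (k := 11 * 15) (by norm_num) (pow_mul ρ 11 15 ▸ hC)⟩
  rw [← pow_mul] at hu
  rcases hA.truncate.exists_chordSystem_or_truncate hz hdeg (pow_pos hρ _) (h_half _ (by norm_num))
    (h_deg _ (by norm_num)) hu with ⟨C, hC⟩ | ⟨u', hu'⟩
  · exact ⟨C, h_density (k := 11 * 15 * 15) (by norm_num) (pow_mul ρ (11 * 15) 15 ▸ hC)⟩
  rw [← pow_mul] at hu'
  obtain ⟨C, hC⟩ := hA.truncate.exists_chordSystem_of_truncate hz hdeg (pow_pos hρ _)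
    (h_half _ (by norm_num)) (h_deg _ (by norm_num)) u' hu'
  exact ⟨C, h_density (k := 11 * 15 * 15 * 11) (by norm_num) (pow_mul ρ (11 * 15 * 15) 11 ▸ hC)⟩

end Existence

end ChordSystem

/-! ### The order of the chords -/

namespace ChordSystem

variable {V α : Type*} {H : SimpleGraph α} {I : V → Set α} {C : ChordSystem H I} {x : α}
  {E E' : Set α} {i j k l : V}

/-- A connected set that avoids the poles and the hub. -/
structure IsFree (C : ChordSystem H I) (E : Set α) : Prop where
  preconnected : (H.induce E).Preconnected
  disjoint_hub : Disjoint E C.hub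
  disjoint_pole₁ : Disjoint E C.pole₁
  disjoint_pole₂ : Disjoint E C.pole₂

lemma isFree_chord (C : ChordSystem H I) (i : V) : C.IsFree (C.chord i) :=
  ⟨C.preconnected_chord i, C.disjoint_chord_hub i, C.disjoint_chord_pole₁ i,
    C.disjoint_chord_pole₂ i⟩

lemma isFree_branch (h : (C.branch j).Nonempty) : C.IsFree (C.branch j) :=
  ⟨(C.isBranch_branch j h).preconnected, (C.isBranch_branch j h).disjoint,
    C.disjoint_branch_pole₁ j, C.disjoint_branch_pole₂ j⟩

lemma IsFree.mono (h : C.IsFree E) (hE' : E' ⊆ E) (hconn : (H.induce E').Preconnected) :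
    C.IsFree E' :=
  ⟨hconn, h.disjoint_hub.mono_left hE', h.disjoint_pole₁.mono_left hE',
    h.disjoint_pole₂.mono_left hE'⟩

lemma IsFree.union (h : C.IsFree E) (h' : C.IsFree E')
    (hconn : (H.induce (E ∪ E')).Preconnected) : C.IsFree (E ∪ E') :=
  ⟨hconn, h.disjoint_hub.union_left h'.disjoint_hub, h.disjoint_pole₁.union_left h'.disjoint_pole₁,
    h.disjoint_pole₂.union_left h'.disjoint_pole₂⟩

lemma IsFree.union_of_inter_nonempty (h : C.IsFree E) (h' : C.IsFree E')
    (hne : (E ∩ E').Nonempty) : C.IsFree (E ∪ E') :=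
  h.union h' (preconnected_union h.preconnected h'.preconnected hne)

/-- The chord `i` is nearer to the point `x` than the chord `k`: it can be reached from `x` by a
free set avoiding chord `k`. Seen from a point next to the hub, this orders the chords. -/
def IsNearer (C : ChordSystem H I) (x : α) (i k : V) : Prop :=
  Disjoint (C.chord i) (C.chord k) ∧
    ∃ E, C.IsFree E ∧ x ∈ E ∧ (E ∩ C.chord i).Nonempty ∧ Disjoint E (C.chord k)

/-- Otherwise the hub and the two chords would form a `K_{3,3}` minor with the two poles and the
union of the sets that reach the chords. -/
lemma IsNearer.asymm (hH : K33MinorFree H) (hx : Touches H {x} C.hub) (hi : x ∉ C.chord i)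
    (hk : x ∉ C.chord k) (h : C.IsNearer x i k) : ¬ C.IsNearer x k i := by
  rintro ⟨-, E', hE', hxE', hEk, hEi'⟩
  obtain ⟨hd, E, hE, hxE, hEi, hEk'⟩ := h
  obtain ⟨P, hPE, hxP, hP, hPi, hPi'⟩ :=
    exists_preconnected_touching_inter hE.preconnected hxE hi hEi
  obtain ⟨Q, hQE, hxQ, hQ, hQk, hQk'⟩ :=
    exists_preconnected_touching_inter hE'.preconnected hxE' hk hEk
  have hPQ : C.IsFree (P ∪ Q) :=
    (hE.mono hPE hP).union_of_inter_nonempty (hE'.mono hQE hQ) ⟨x, hxP, hxQ⟩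
  have hPQi : Disjoint (P ∪ Q) (C.chord i) := hPi.union_left (hEi'.mono_left hQE)
  have hPQk : Disjoint (P ∪ Q) (C.chord k) := (hEk'.mono_left hPE).union_left hQk
  have hPQi' : Touches H (P ∪ Q) (C.chord i) :=
    hPi'.mono Set.subset_union_left Set.inter_subset_right
  have hPQk' : Touches H (P ∪ Q) (C.chord k) :=
    hQk'.mono Set.subset_union_right Set.inter_subset_right
  exact hH ![C.pole₁, C.pole₂, P ∪ Q] ![C.hub, C.chord i, C.chord k] {
    preconnected_left := by
      simp only [Fin.forall_fin_succ, IsEmpty.forall_iff, and_true]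
      exact ⟨C.isBranch_pole₁.preconnected, C.isBranch_pole₂.preconnected, hPQ.preconnected⟩
    preconnected_right := by
      simp only [Fin.forall_fin_succ, IsEmpty.forall_iff, and_true]
      exact ⟨C.preconnected_hub, C.preconnected_chord i, C.preconnected_chord k⟩
    disjoint_left := pairwise_disjoint_vec_three C.disjoint_poles hPQ.disjoint_pole₁.symm
      hPQ.disjoint_pole₂.symm
    disjoint_right := pairwise_disjoint_vec_three (C.disjoint_chord_hub i).symm
      (C.disjoint_chord_hub k).symm hd
    disjoint := by
      simp only [Fin.forall_fin_succ, IsEmpty.forall_iff, and_true]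
      exact ⟨⟨C.isBranch_pole₁.disjoint, (C.disjoint_chord_pole₁ i).symm,
          (C.disjoint_chord_pole₁ k).symm⟩,
        ⟨C.isBranch_pole₂.disjoint, (C.disjoint_chord_pole₂ i).symm,
          (C.disjoint_chord_pole₂ k).symm⟩, hPQ.disjoint_hub, hPQi, hPQk⟩
    touches := by
      simp only [Fin.forall_fin_succ, IsEmpty.forall_iff, and_true]
      exact ⟨⟨C.isBranch_pole₁.touches.symm, (C.touches_chord_pole₁ i hEi.right).symm,
          (C.touches_chord_pole₁ k hEk.right).symm⟩,
        ⟨C.isBranch_pole₂.touches.symm, (C.touches_chord_pole₂ i hEi.right).symm,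
          (C.touches_chord_pole₂ k hEk.right).symm⟩,
        hx.mono (Set.singleton_subset_iff.2 (.inl hxP)) subset_rfl, hPQi', hPQk'⟩ }

lemma isNearer_or_isNearer (hi : x ∉ C.chord i) (hk : x ∉ C.chord k)
    (hd : Disjoint (C.chord i) (C.chord k)) (hE : C.IsFree E) (hx : x ∈ E)
    (hEi : (E ∩ C.chord i).Nonempty) : C.IsNearer x i k ∨ C.IsNearer x k i := by
  obtain ⟨P, hPE, hxP, hP, hPd, p, hp, q, ⟨-, hq⟩, hpq⟩ :=
    exists_preconnected_touching_inter (T := C.chord i ∪ C.chord k) hE.preconnected hx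
      (not_or.2 ⟨hi, hk⟩) (hEi.mono (Set.inter_subset_inter_right _ Set.subset_union_left))
  obtain ⟨hPi, hPk⟩ := Set.disjoint_union_right.1 hPd
  have h_union (l : V) (hl : q ∈ C.chord l) : C.IsFree (P ∪ C.chord l) :=
    (hE.mono hPE hP).union (C.isFree_chord l)
      (preconnected_union_of_touches hP (C.preconnected_chord l) ⟨p, hp, q, hl, hpq⟩)
  rcases hq with hq | hq
  · exact .inl ⟨hd, _, h_union i hq, .inl hxP, ⟨q, .inr hq, hq⟩, hPk.union_left hd⟩
  · exact .inr ⟨hd.symm, _, h_union k hq, .inl hxP, ⟨q, .inr hq, hq⟩, hPi.union_left hd.symm⟩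

lemma IsNearer.chord_inter_nonempty (hH : K33MinorFree H) (hx : Touches H {x} C.hub)
    (hk : x ∉ C.chord k) (hl : x ∉ C.chord l) (hik : C.IsNearer x i k) (hkl : C.IsNearer x k l)
    (hE : C.IsFree E) (hiE : (C.chord i ∩ E).Nonempty) (hlE : (C.chord l ∩ E).Nonempty) :
    (C.chord k ∩ E).Nonempty := by
  obtain ⟨hd, D, hD, hxD, hDi, hDk⟩ := hik
  rw [← Set.not_disjoint_iff_nonempty_inter]
  intro hkE
  have hDi' := hD.union_of_inter_nonempty (C.isFree_chord i) hDi
  have hDE := hDi'.union_of_inter_nonempty hE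
    (hiE.mono (Set.inter_subset_inter_left _ Set.subset_union_right))
  exact hkl.asymm hH hx hk hl ⟨hkl.1.symm, _, hDE, .inl (.inl hxD),
    Set.inter_comm _ _ ▸ hlE.mono (Set.inter_subset_inter_right _ Set.subset_union_right),
    (hDk.union_left hd).union_left hkE.symm⟩

lemma IsNearer.trans (hH : K33MinorFree H) (hx : Touches H {x} C.hub) (hk : x ∉ C.chord k)
    (hl : x ∉ C.chord l) (hik : C.IsNearer x i k) (hkl : C.IsNearer x k l) :
    C.IsNearer x i l := by
  obtain ⟨hd, E, hE, hxE, hEi, hEk⟩ := hik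
  have hEi' := hE.union_of_inter_nonempty (C.isFree_chord i) hEi
  have h_avoid : Disjoint (E ∪ C.chord i) (C.chord l) := by
    by_contra h
    rw [Set.not_disjoint_iff_nonempty_inter] at h
    exact hkl.asymm hH hx hk hl
      ⟨hkl.1.symm, _, hEi', .inl hxE, h, hEk.union_left hd⟩
  obtain ⟨hEl, hil⟩ := Set.disjoint_union_left.1 h_avoid
  exact ⟨hil, E, hE, hxE, hEi, hEl⟩

/-- A branch `j₀` that meets many chords supplies the point `x`, at the cost of the few chords
through `x`, and the free set. -/
lemma exists_base_point [Fintype V] [Nonempty V] {τ ρ : ℝ}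
    (hdeg : ∀ w, 𝔼 v, iverson (w ∈ I v) ≤ τ) (hρ : 0 < ρ)
    (h : ρ ≤ meetDensity C.chord C.branch) :
    ∃ x E, Touches H {x} C.hub ∧ C.IsFree E ∧ x ∈ E ∧
      ρ ^ 2 - τ ≤ 𝔼 i, 𝔼 j, iverson ((x ∉ C.chord i ∧ (E ∩ C.chord i).Nonempty) ∧
        (C.chord i ∩ C.branch j).Nonempty) := by
  obtain ⟨j₀, hj₀⟩ : ∃ j₀, ρ ^ 2 ≤ 𝔼 i, 𝔼 j, iverson
      ((C.chord i ∩ C.branch j₀).Nonempty ∧ (C.chord i ∩ C.branch j).Nonempty) := by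
    refine exists_le_of_le_expect ((sq_le_expect_iverson_and hρ.le h).trans_eq ?_)
    exact Finset.expect_comm _ _ _
  obtain ⟨i, hi⟩ := exists_le_of_le_expect hj₀
  obtain ⟨j, hj⟩ := exists_le_of_le_expect hi
  have hne : (C.branch j₀).Nonempty := (of_iverson_pos ((pow_pos hρ 2).trans_le hj)).1.right
  obtain ⟨y, hy, x, hx, hyx⟩ := (C.isBranch_branch j₀ hne).touches
  refine ⟨x, _, ⟨x, rfl, y, hy, hyx.symm⟩, isFree_branch hne, hx, ?_⟩
  have h_split (i j : V) : iverson
      ((C.chord i ∩ C.branch j₀).Nonempty ∧ (C.chord i ∩ C.branch j).Nonempty) ≤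
        iverson ((x ∉ C.chord i ∧ (C.branch j₀ ∩ C.chord i).Nonempty) ∧
          (C.chord i ∩ C.branch j).Nonempty) + iverson (x ∈ I i) := by
    rw [Set.inter_comm (C.branch j₀)]
    refine (iverson_mono fun ⟨h₀, h⟩ => ?_).trans iverson_or_le
    exact (em (x ∈ C.chord i)).symm.imp (fun hx => ⟨⟨hx, h₀⟩, h⟩) fun hx => C.chord_subset i hx
  have h_sum := hj₀.trans (expect_mono fun i => expect_mono (h_split i))
  simp only [Finset.expect_add_distrib, Fintype.expect_const] at h_sum
  linarith [hdeg x]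

end ChordSystem

/-! ### Posets without large incomparable sets -/

open Classical in
lemma exists_linearExtension (P : Type*) [PartialOrder P] [Fintype P] :
    ∃ e : P ≃ Fin (Fintype.card P), StrictMono e := by
  let _ : Fintype (LinearExtension P) := ‹Fintype P›
  let m : LinearExtension P ≃o Fin (Fintype.card P) :=
    (Fintype.orderIsoFinOfCardEq (LinearExtension P) rfl).symm
  refine ⟨m.toEquiv, m.strictMono.comp ?_⟩
  exact (toLinearExtension (α := P)).monotone.strictMono_of_injective fun _ _ h => h

/-- Any two disjoint sets of at least `t` elements have comparable members. -/
def LargeSetsComparable (P : Type*) [PartialOrder P] (t : ℕ) : Prop :=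
  ∀ A B : Finset P, Disjoint A B → t ≤ A.card → t ≤ B.card → ∃ a ∈ A, ∃ b ∈ B, a < b ∨ b < a

lemma LargeSetsComparable.orderDual {P : Type*} [PartialOrder P] {t : ℕ}
    (h : LargeSetsComparable P t) : LargeSetsComparable Pᵒᵈ t := by
  intro A B hAB hA hB
  obtain ⟨a, ha, b, hb, hab⟩ := h (A.map OrderDual.ofDual.toEmbedding)
    (B.map OrderDual.ofDual.toEmbedding) ((Finset.disjoint_map _).2 hAB)
    ((Finset.card_map _).symm ▸ hA) ((Finset.card_map _).symm ▸ hB)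
  exact ⟨_, Finset.mem_map_equiv.1 ha, _, Finset.mem_map_equiv.1 hb, hab.symm⟩

section Rank

variable {P : Type*} [Fintype P] {N : ℕ} {e : P ≃ Fin N}

open Finset

lemma map_rank_Ico {x y : ℕ} (hN : y ≤ N) :
    map (e.toEmbedding.trans Fin.valEmbedding) {k : P | x ≤ e k ∧ e k < y} = Ico x y := by
  ext i
  simp only [mem_map, mem_filter_univ, Function.Embedding.trans_apply, Equiv.coe_toEmbedding,
    Fin.valEmbedding_apply, mem_Ico]
  refine ⟨fun ⟨_, hk, hi⟩ => hi ▸ hk, fun hi => ⟨e.symm ⟨i, by omega⟩, ?_⟩⟩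
  simpa only [Equiv.apply_symm_apply, and_true] using hi

lemma card_rank_Ico {x y : ℕ} (hN : y ≤ N) : #{k : P | x ≤ e k ∧ e k < y} = y - x := by
  rw [← card_map (e.toEmbedding.trans Fin.valEmbedding), map_rank_Ico hN, Nat.card_Ico]

lemma card_rank_Ico_le (x y : ℕ) : #{k : P | x ≤ e k ∧ e k < y} ≤ y - x := by
  rw [← Nat.card_Ico]
  refine card_le_card_of_injOn (fun k => (e k : ℕ)) (fun k hk => ?_)
    (Fin.val_injective.comp e.injective).injOn
  exact mem_coe.2 (mem_Ico.2 ((mem_filter_univ k).1 (mem_coe.1 hk)))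

end Rank

section Poset

variable {P : Type*} [PartialOrder P] [Fintype P] {N t R M : ℕ} {e : P ≃ Fin N} {S U : Finset P}

open Finset

open Classical in
/-- The elements of rank at least `x` that lie above no member of `S`, where the rank is the
position `e` in a linear extension. -/
noncomputable def missedFrom (e : P ≃ Fin N) (x : ℕ) (S : Finset P) : Finset P :=
  {k | x ≤ e k ∧ ∀ s ∈ S, ¬ s < k}

open Classical in
lemma mem_missedFrom {x : ℕ} {k : P} : k ∈ missedFrom e x S ↔ x ≤ e k ∧ ∀ s ∈ S, ¬ s < k := by
  rw [missedFrom, mem_filter_univ]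

lemma missedFrom_subset_missedFrom {x y : ℕ} (h : x ≤ y) : missedFrom e y S ⊆ missedFrom e x S :=
  fun _ hk => mem_missedFrom.2 ((mem_missedFrom.1 hk).imp_left h.trans)

lemma card_missedFrom_lt (hP : LargeSetsComparable P t) (he : StrictMono e) {x : ℕ}
    (hU : ∀ u ∈ U, e u < x) (ht : t ≤ #U) : #(missedFrom e x U) < t := by
  by_contra! hc
  have h_disj : Disjoint U (missedFrom e x U) := disjoint_left.2 fun u hu hk =>
    (hU u hu).not_ge (mem_missedFrom.1 hk).1
  obtain ⟨a, ha, b, hb, hab | hba⟩ := hP U _ h_disj ht hc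
  · exact (mem_missedFrom.1 hb).2 a ha hab
  · have := he hba
    have := hU a ha
    have := (mem_missedFrom.1 hb).1
    omega

lemma missedFrom_eq_empty {x : ℕ} (hN : N ≤ x) : missedFrom e x S = ∅ :=
  eq_empty_of_forall_notMem fun k hk => ((e k).2.trans_le hN).not_ge (mem_missedFrom.1 hk).1

open Classical in
/-- One of the two halves of `S` lies below `t` of the `3 * t` elements of rank `x` to
`x + 3 * t - 1`, hence below all but few elements of higher rank. -/
lemma card_missedFrom_lt_or_of_union (hP : LargeSetsComparable P t) (he : StrictMono e) {x : ℕ}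
    {S₁ S₂ : Finset P} (h : #(missedFrom e x (S₁ ∪ S₂)) < t) :
    #(missedFrom e (x + 3 * t) S₁) < t ∨ #(missedFrom e (x + 3 * t) S₂) < t := by
  rcases le_or_gt N (x + 3 * t) with hN | hN
  · exact .inl (by rw [missedFrom_eq_empty hN, card_empty]; omega)
  let W (T : Finset P) : Finset P := {k | (x ≤ e k ∧ e k < x + 3 * t) ∧ ∃ s ∈ T, s < k}
  have h_above (T : Finset P) (hT : t ≤ #(W T)) : #(missedFrom e (x + 3 * t) T) < t := by
    refine (card_le_card fun k hk => ?_).trans_lt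
      (card_missedFrom_lt hP he (fun u hu => ((mem_filter_univ _).1 hu).1.2) hT)
    rw [mem_missedFrom] at hk ⊢
    refine hk.imp_right fun hk u hu huk => ?_
    obtain ⟨s, hs, hsu⟩ := ((mem_filter_univ _).1 hu).2
    exact hk s hs (hsu.trans huk)
  have h_cover : ({k : P | x ≤ e k ∧ e k < x + 3 * t} : Finset P) ⊆
      (W S₁ ∪ W S₂) ∪ missedFrom e x (S₁ ∪ S₂) := by
    intro k hk
    simp only [W, mem_union, mem_missedFrom, mem_filter_univ] at hk ⊢
    grind
  have h_card := (card_le_card h_cover).trans (card_union_le _ _)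
  rw [card_rank_Ico hN.le, Nat.add_sub_cancel_left] at h_card
  have := card_union_le (W S₁) (W S₂)
  exact (le_or_gt t #(W S₁)).imp (h_above S₁) fun h => h_above S₂ (by omega)

lemma exists_card_missedFrom_singleton_lt (hP : LargeSetsComparable P t) (he : StrictMono e)
    {x : ℕ} (hS : #S ≤ 2 ^ R) (hne : S.Nonempty) (h : #(missedFrom e x S) < t) :
    ∃ s ∈ S, #(missedFrom e (x + R * (3 * t)) {s}) < t := by
  classical
  induction R generalizing x S with
  | zero =>
    obtain ⟨s, rfl⟩ := card_eq_one.1 (hS.antisymm hne.card_pos)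
    exact ⟨s, mem_singleton_self s, by rwa [zero_mul, add_zero]⟩
  | succ R ih =>
    rcases Nat.lt_or_ge #S 2 with h1 | h2
    · obtain ⟨s, rfl⟩ := card_eq_one.1 ((Nat.lt_succ_iff.1 h1).antisymm hne.card_pos)
      exact ⟨s, mem_singleton_self s,
        (card_le_card (missedFrom_subset_missedFrom (Nat.le_add_right _ _))).trans_lt h⟩
    obtain ⟨S₁, hS₁, hcard₁⟩ := exists_subset_card_eq (Nat.div_le_self #S 2)
    have hcard₂ := card_sdiff_of_subset hS₁
    rw [pow_succ] at hS
    rw [← union_sdiff_of_subset hS₁] at h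
    have h_rank : x + (R + 1) * (3 * t) = x + 3 * t + R * (3 * t) := by ring
    rw [h_rank]
    rcases card_missedFrom_lt_or_of_union hP he h with h | h
    · obtain ⟨s, hs, hst⟩ := ih (by omega) (card_pos.1 (by omega)) h
      exact ⟨s, hS₁ hs, hst⟩
    · obtain ⟨s, hs, hst⟩ := ih (by omega) (card_pos.1 (by omega)) h
      exact ⟨s, sdiff_subset hs, hst⟩

open Classical in
lemma card_lt_of_le_card_missedFrom (hP : LargeSetsComparable P t) (he : StrictMono e)
    (hR : N ≤ 2 ^ R) (hM : R * (3 * t) ≤ M) (x : ℕ) :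
    #{s : P | e s < x ∧ t ≤ #(missedFrom e (x + M) {s})} < t := by
  by_contra! hc
  have h_missed := card_missedFrom_lt hP he (fun u hu => ((mem_filter_univ _).1 hu).1) hc
  obtain ⟨s, hs, hst⟩ := exists_card_missedFrom_singleton_lt (R := R) hP he
    ((card_le_univ _).trans (by rwa [Fintype.card_congr e, Fintype.card_fin]))
    (card_pos.1 (by omega)) h_missed
  exact ((mem_filter_univ _).1 hs).2.not_gt <|
    (card_le_card (missedFrom_subset_missedFrom (by omega))).trans_lt hst

open Classical in
/-- Cut the ranks into blocks of length `M`; each block has fewer than `t` such elements. -/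
lemma card_missedFrom_le (hP : LargeSetsComparable P t) (he : StrictMono e)
    (hR : N ≤ 2 ^ R) (hM : R * (3 * t) ≤ M) (hM₀ : 0 < M) :
    #{s : P | t ≤ #(missedFrom e (e s + 2 * M) {s})} ≤ (N / M + 1) * t := by
  have h_block : ({s : P | t ≤ #(missedFrom e (e s + 2 * M) {s})} : Finset P) ⊆
      (range (N / M + 1)).biUnion fun q =>
        {s | e s < (q + 1) * M ∧ t ≤ #(missedFrom e ((q + 1) * M + M) {s})} := by
    intro s hs
    rw [mem_filter_univ] at hs
    simp only [mem_biUnion, mem_range, mem_filter_univ]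
    refine ⟨e s / M, Nat.lt_succ_of_le (Nat.div_le_div_right (e s).2.le),
      Nat.lt_mul_of_div_lt (Nat.lt_succ_self _) hM₀,
      hs.trans (card_le_card (missedFrom_subset_missedFrom ?_))⟩
    have := Nat.div_mul_le_self (e s) M
    rw [add_mul]
    omega
  refine (card_le_card h_block).trans ((card_biUnion_le_card_mul _ _ t fun q _ =>
    (card_lt_of_le_card_missedFrom hP he hR hM _).le).trans_eq (by rw [card_range]))

open Classical in
/-- Count the `M` elements of rank `e a + 2 * M` to `e a + 3 * M - 1`. -/
lemma le_card_between {e' : Pᵒᵈ ≃ Fin N} (he' : ∀ k, (e' (OrderDual.toDual k) : ℕ) + e k + 1 = N)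
    (hM : 3 * t ≤ M) {a b : P} (ha : #(missedFrom e (e a + 2 * M) {a}) < t)
    (hb : #(missedFrom e' (e' (OrderDual.toDual b) + 2 * M) {OrderDual.toDual b}) < t)
    (hab : e a + 5 * M ≤ e b) : t ≤ #{k | a < k ∧ k < b} := by
  have h_cover : ({k : P | e a + 2 * M ≤ e k ∧ e k < e a + 3 * M} : Finset P) ⊆
      ({k | a < k ∧ k < b} : Finset P) ∪ (missedFrom e (e a + 2 * M) {a} ∪
        (missedFrom e' (e' (OrderDual.toDual b) + 2 * M) {OrderDual.toDual b}).map
          OrderDual.ofDual.toEmbedding) := by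
    intro k hk
    simp only [mem_filter_univ, mem_union, mem_missedFrom, mem_map_equiv, forall_eq,
      mem_singleton, OrderDual.ofDual_symm_eq, OrderDual.toDual_lt_toDual] at hk ⊢
    have := he' k
    have := he' b
    by_cases hak : a < k
    · by_cases hkb : k < b
      · exact .inl ⟨hak, hkb⟩
      · exact .inr (.inr ⟨by omega, hkb⟩)
    · exact .inr (.inl ⟨hk.1, hak⟩)
  have h_card := (card_le_card h_cover).trans
    ((card_union_le _ _).trans (Nat.add_le_add_left (card_union_le _ _) _))
  rw [card_rank_Ico (by omega), card_map] at h_card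
  omega

open Classical in
lemma exists_exceptional (hP : LargeSetsComparable P t) (hR : Fintype.card P ≤ 2 ^ R)
    (hRM : R * (3 * t) ≤ M) (hM : 3 * t ≤ M) (hM₀ : 0 < M) :
    ∃ D : Finset P, #D ≤ 2 * ((Fintype.card P / M + 1) * t) ∧ ∀ a ∉ D,
      #{b ∈ Dᶜ | #{k | a < k ∧ k < b} < t ∧ #{k | b < k ∧ k < a} < t} ≤ 10 * M := by
  obtain ⟨e, he⟩ := exists_linearExtension P
  let e' : Pᵒᵈ ≃ Fin (Fintype.card P) := OrderDual.ofDual.trans (e.trans Fin.revPerm)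
  have he' : StrictMono e' := fun _ _ h => Fin.rev_lt_rev.2 (he h)
  have h_rev (k : P) : (e' (OrderDual.toDual k) : ℕ) + e k + 1 = Fintype.card P := by
    have : (e' (OrderDual.toDual k) : ℕ) = Fintype.card P - (e k + 1) := Fin.val_rev (e k)
    omega
  let D₁ : Finset P := {s | t ≤ #(missedFrom e (e s + 2 * M) {s})}
  let D₂ : Finset Pᵒᵈ := {s | t ≤ #(missedFrom e' (e' s + 2 * M) {s})}
  refine ⟨D₁ ∪ D₂.map OrderDual.ofDual.toEmbedding, ?_, fun a ha => ?_⟩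
  · refine (card_union_le _ _).trans ?_
    rw [card_map, two_mul]
    exact add_le_add (card_missedFrom_le hP he hR hRM hM₀)
      (card_missedFrom_le hP.orderDual he' hR hRM hM₀)
  have h_between {a b : P} (ha : a ∉ D₁ ∪ D₂.map OrderDual.ofDual.toEmbedding)
      (hb : b ∉ D₁ ∪ D₂.map OrderDual.ofDual.toEmbedding) (hab : e a + 5 * M ≤ e b) :
      t ≤ #{k | a < k ∧ k < b} := by
    simp only [D₁, D₂, mem_union, mem_map_equiv, mem_filter_univ, not_or, not_le,
      OrderDual.ofDual_symm_eq] at ha hb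
    exact le_card_between h_rev hM ha.1 hb.2 hab
  refine (card_le_card fun b hb => ?_).trans
    ((card_rank_Ico_le (e := e) (e a - 5 * M) (e a + 5 * M)).trans (by omega))
  rw [mem_filter, mem_compl] at hb
  rw [mem_filter_univ]
  have := mt (h_between ha hb.1) hb.2.1.not_ge
  have := mt (h_between hb.1 ha) hb.2.2.not_ge
  omega

end Poset

section Codegree

variable {P V : Type*} [Fintype V] {Q : P → V → Prop}

open Finset

open Classical in
lemma sq_sum_card_le_sum_codegree (S : Finset P) :
    (∑ a ∈ S, #{j | Q a j}) ^ 2 ≤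
      Fintype.card V * ∑ a ∈ S, ∑ b ∈ S, #{j | Q a j ∧ Q b j} := by
  have h_double : ∑ a ∈ S, #{j | Q a j} = ∑ j, #{a ∈ S | Q a j} :=
    sum_card_bipartiteAbove_eq_sum_card_bipartiteBelow Q
  have h_sq (j : V) : #{a ∈ S | Q a j} ^ 2 = #{p ∈ S ×ˢ S | Q p.1 j ∧ Q p.2 j} := by
    rw [sq, ← card_product, ← filter_product]
  rw [h_double, ← sum_product' S S fun a b => #{j | Q a j ∧ Q b j}]
  refine sq_sum_le_card_mul_sum_sq.trans_eq ?_
  rw [card_univ, sum_congr rfl fun j _ => h_sq j]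
  congr 1
  exact (sum_card_bipartiteAbove_eq_sum_card_bipartiteBelow
    fun (p : P × P) j => Q p.1 j ∧ Q p.2 j).symm

open Classical in
lemma sum_codegree_le {S : Finset P} {a : P} {c : P → Prop} [DecidablePred c] {K L : ℝ}
    (hS : (#S : ℝ) ≤ Fintype.card V) (hL : 0 ≤ L) (hc : (#{b ∈ S | c b} : ℝ) ≤ K)
    (h : ∀ b ∈ S, ¬ c b → (#{j | Q a j ∧ Q b j} : ℝ) ≤ L) :
    ∑ b ∈ S, (#{j | Q a j ∧ Q b j} : ℝ) ≤ (K + L) * Fintype.card V := by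
  have h_codeg (b : P) (hb : b ∈ S) :
      (#{j | Q a j ∧ Q b j} : ℝ) ≤ (if c b then (Fintype.card V : ℝ) else 0) + L := by
    split_ifs with hcb
    · exact (Nat.cast_le.2 (card_le_univ _)).trans (le_add_of_nonneg_right hL)
    · exact (h b hb hcb).trans_eq (zero_add _).symm
  calc ∑ b ∈ S, (#{j | Q a j ∧ Q b j} : ℝ)
      ≤ ∑ b ∈ S, ((if c b then (Fintype.card V : ℝ) else 0) + L) := sum_le_sum h_codeg
    _ = #{b ∈ S | c b} * Fintype.card V + #S * L := by
        rw [sum_add_distrib, ← sum_filter, sum_const, sum_const, nsmul_eq_mul, nsmul_eq_mul]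
    _ ≤ K * Fintype.card V + Fintype.card V * L := by gcongr
    _ = (K + L) * Fintype.card V := by ring

variable [Fintype P] {σ : ℝ}

open Classical in
/-- By Cauchy–Schwarz the average codegree of two elements outside `D` is at least `σ ^ 2 * n / 4`,
and the excluded pairs `c a b` account for at most half of it. -/
lemma exists_large_codegree {D : Finset P} {c : P → P → Prop} [∀ a, DecidablePred (c a)]
    (hσ : 0 < σ) (hV : 0 < Fintype.card V) (hPV : Fintype.card P ≤ Fintype.card V)
    (hQ : σ * Fintype.card V ^ 2 ≤ ∑ a, #{j | Q a j})
    (hD : (#D : ℝ) ≤ σ * Fintype.card V / 2)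
    (hc : ∀ a ∉ D, (#{b ∈ Dᶜ | c a b} : ℝ) ≤ σ ^ 2 * Fintype.card V / 8) :
    ∃ a b, ¬ c a b ∧ σ ^ 2 * Fintype.card V / 16 ≤ #{j | Q a j ∧ Q b j} := by
  set n := Fintype.card V
  have hn : (0 : ℝ) < n := Nat.cast_pos.2 hV
  have h_deg : σ * n ^ 2 / 2 ≤ ∑ a ∈ Dᶜ, (#{j | Q a j} : ℝ) := by
    have h_D : ∑ a ∈ D, (#{j | Q a j} : ℝ) ≤ #D * n := by
      rw [← nsmul_eq_mul]
      exact sum_le_card_nsmul _ _ _ fun a _ => Nat.cast_le.2 (card_le_univ _)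
    have h_split := sum_add_sum_compl D fun a => (#{j | Q a j} : ℝ)
    push_cast at hQ
    nlinarith
  by_contra! h
  have h_card : (#Dᶜ : ℝ) ≤ n := Nat.cast_le.2 ((card_le_univ _).trans hPV)
  have h_row (a : P) (ha : a ∈ Dᶜ) :
      ∑ b ∈ Dᶜ, (#{j | Q a j ∧ Q b j} : ℝ) ≤ (σ ^ 2 * n / 8 + σ ^ 2 * n / 16) * n :=
    sum_codegree_le h_card (by positivity) (hc a (mem_compl.1 ha)) fun b _ hab =>
      (h a b hab).le
  have h_upper : ∑ a ∈ Dᶜ, ∑ b ∈ Dᶜ, (#{j | Q a j ∧ Q b j} : ℝ) ≤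
      n * ((σ ^ 2 * n / 8 + σ ^ 2 * n / 16) * n) := by
    refine (sum_le_card_nsmul _ _ _ h_row).trans ?_
    rw [nsmul_eq_mul]
    gcongr
  have h_lower : (σ * n ^ 2 / 2) ^ 2 ≤ n * ∑ a ∈ Dᶜ, ∑ b ∈ Dᶜ, (#{j | Q a j ∧ Q b j} : ℝ) := by
    refine (pow_le_pow_left₀ (by positivity) h_deg 2).trans ?_
    exact_mod_cast sq_sum_card_le_sum_codegree (Q := Q) Dᶜ
  have h_pos : 0 < σ ^ 2 * (n : ℝ) ^ 4 := mul_pos (pow_pos hσ 2) (pow_pos hn 4)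
  nlinarith

end Codegree

section Biclique

variable {P V : Type*} [PartialOrder P] [Fintype P] [Fintype V] {X : V → V → Prop}
  {Q : P → V → Prop} {t R : ℕ} {σ : ℝ}

open Finset

lemma exists_block_length {n : ℕ} (ht : t ≠ 0) (hσ : 0 < σ) (hσ' : σ ≤ 1)
    (h : 1000 * t * (R + 2) ≤ σ ^ 3 * n) :
    ∃ M : ℕ, R * (3 * t) ≤ M ∧ 3 * t ≤ M ∧ 8 * t ≤ σ * M ∧ 80 * M ≤ σ ^ 2 * n := by
  have ht' : (1 : ℝ) ≤ t := by exact_mod_cast Nat.one_le_iff_ne_zero.2 ht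
  have h_cube : σ ^ 3 * n ≤ σ ^ 2 * n := by
    gcongr ?_ * _
    exact pow_le_pow_of_le_one hσ.le hσ' (by norm_num)
  have hRt : 0 ≤ (R : ℝ) * t := by positivity
  have h_floor : σ ^ 2 * n / 160 ≤ (⌊σ ^ 2 * n / 80⌋₊ : ℝ) := by
    linarith [Nat.lt_floor_add_one (σ ^ 2 * n / 80)]
  refine ⟨⌊σ ^ 2 * n / 80⌋₊, Nat.le_floor ?_, Nat.le_floor ?_, ?_, ?_⟩
  · push_cast
    linarith
  · push_cast
    linarith
  · linarith [mul_le_mul_of_nonneg_left h_floor hσ.le]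
  · linarith [Nat.floor_le (by positivity : 0 ≤ σ ^ 2 * n / 80)]

lemma mul_div_add_one_le {p n M : ℕ} (hM₀ : 0 < M) (hpn : p ≤ n) (hMn : M ≤ n)
    (ht : 8 * t ≤ σ * M) : ((2 * ((p / M + 1) * t) : ℕ) : ℝ) ≤ σ * n / 2 := by
  have hM : (0 : ℝ) < M := Nat.cast_pos.2 hM₀
  have h_blocks : ((p / M + 1 : ℕ) : ℝ) ≤ 2 * (n / M) := by
    have h_div : ((p / M : ℕ) : ℝ) ≤ n / M := Nat.cast_div_le.trans (by gcongr)
    have h_one : (1 : ℝ) ≤ n / M := (one_le_div hM).2 (Nat.cast_le.2 hMn)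
    push_cast at h_div ⊢
    linarith
  calc ((2 * ((p / M + 1) * t) : ℕ) : ℝ) = 2 * (((p / M + 1 : ℕ) : ℝ) * t) := by norm_cast
    _ ≤ 2 * (2 * (n / M) * t) := by gcongr
    _ = 8 * t / M * (n / 2) := by ring
    _ ≤ σ * (n / 2) := by
        gcongr
        exact (div_le_iff₀ hM).2 ht
    _ = σ * n / 2 := by ring

open Classical in
lemma exists_large_between_and_codegree (hP : LargeSetsComparable P t) (ht : t ≠ 0) (hσ : 0 < σ)
    (hPV : Fintype.card P ≤ Fintype.card V)
    (hQ : σ * Fintype.card V ^ 2 ≤ ∑ a, #{j | Q a j})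
    (hn : 1000 * t * (R + 2) ≤ σ ^ 3 * Fintype.card V) (hR : Fintype.card V ≤ 2 ^ R) :
    ∃ a b, t ≤ #{k | a < k ∧ k < b} ∧ 2 * t ≤ #{j | Q a j ∧ Q b j} := by
  have ht₀ : (1 : ℝ) ≤ t := Nat.one_le_cast.2 (Nat.one_le_iff_ne_zero.2 ht)
  have hV : 0 < Fintype.card V := by
    rw [← Nat.cast_pos (α := ℝ)]
    exact pos_of_mul_pos_right ((by positivity : (0 : ℝ) < 1000 * t * (R + 2)).trans_le hn)
      (by positivity)
  have hσ' : σ ≤ 1 := by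
    have h_card : ∑ a, #{j | Q a j} ≤ Fintype.card V ^ 2 := by
      rw [sq]
      exact (sum_le_card_nsmul _ _ _ fun a _ => card_le_univ _).trans (Nat.mul_le_mul_right _ hPV)
    refine le_of_mul_le_mul_right ?_ (by positivity : (0 : ℝ) < Fintype.card V ^ 2)
    rw [one_mul]
    exact hQ.trans (mod_cast h_card)
  obtain ⟨M, hRM, htM, hσM, hM⟩ := exists_block_length ht hσ hσ' hn
  have hM₀ : 0 < M := by omega
  have hM₀' : (0 : ℝ) ≤ M := Nat.cast_nonneg M
  have hMV : M ≤ Fintype.card V := by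
    rw [← Nat.cast_le (α := ℝ)]
    have := mul_le_of_le_one_left (Nat.cast_nonneg (Fintype.card V))
      (pow_le_one₀ hσ.le hσ' (n := 2))
    linarith
  obtain ⟨D, hD, hfar⟩ := exists_exceptional hP (hPV.trans hR) hRM htM hM₀
  obtain ⟨a, b, hab, hcodeg⟩ := exists_large_codegree hσ hV hPV hQ
    ((Nat.cast_le.2 hD).trans (mul_div_add_one_le hM₀ hPV hMV hσM))
    (fun a ha => (Nat.cast_le.2 (hfar a ha)).trans (by push_cast; linarith))
  have h_codeg : 2 * t ≤ #{j | Q a j ∧ Q b j} := by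
    rw [← Nat.cast_le (α := ℝ)]
    push_cast
    have := mul_le_of_le_one_left hM₀' hσ'
    linarith
  rcases le_or_gt t #{k | a < k ∧ k < b} with h | h
  · exact ⟨a, b, h, h_codeg⟩
  · refine ⟨b, a, not_lt.1 fun h' => hab ⟨h, h'⟩, ?_⟩
    simpa only [and_comm] using h_codeg

/-- The elements `f k` with `k` between `a` and `b` all meet the common neighbours of `a` and `b`,
and both families are large for some `a` and `b`. -/
theorem exists_biclique_of_between (f : P ↪ V) (hX : ∀ a b, ¬ X (f a) (f b) → a < b ∨ b < a)
    (hQ : ∀ a k b j, a < k → k < b → Q a j → Q b j → X (f k) j) (ht : t ≠ 0) (hσ : 0 < σ)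
    (hden : σ * Fintype.card V ^ 2 ≤ ∑ a, ∑ j, iverson (Q a j))
    (hn : 1000 * t * (R + 2) ≤ σ ^ 3 * Fintype.card V) (hR : Fintype.card V ≤ 2 ^ R) :
    ∃ A B : Finset V, Disjoint A B ∧ t ≤ #A ∧ t ≤ #B ∧ ∀ a ∈ A, ∀ b ∈ B, X a b := by
  classical
  by_contra! h
  have hP : LargeSetsComparable P t := by
    intro A B hAB hA hB
    obtain ⟨_, hfa, _, hfb, hab⟩ := h (A.map f) (B.map f) ((disjoint_map f).2 hAB)
      (hA.trans_eq (card_map f).symm) (hB.trans_eq (card_map f).symm)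
    obtain ⟨a, ha, rfl⟩ := mem_map.1 hfa
    obtain ⟨b, hb, rfl⟩ := mem_map.1 hfb
    exact ⟨a, ha, b, hb, hX a b hab⟩
  obtain ⟨a, b, hA, hB⟩ := exists_large_between_and_codegree (Q := Q) hP ht hσ
    (Fintype.card_le_of_embedding f) (by simpa only [iverson, sum_boole, Nat.cast_sum] using hden)
    hn hR
  obtain ⟨A, hAsub, hAcard⟩ := exists_subset_card_eq hA
  let B : Finset V := {j | Q a j ∧ Q b j}
  obtain ⟨_, hfk, j, hj, hkj⟩ := h (A.map f) (B \ A.map f) disjoint_sdiff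
    (hAcard.symm.trans (card_map f).symm).le
    ((Nat.le_sub_of_add_le (by rwa [card_map, hAcard, ← two_mul])).trans (le_card_sdiff _ _))
  obtain ⟨k, hk, rfl⟩ := mem_map.1 hfk
  obtain ⟨hak, hkb⟩ := (mem_filter_univ _).1 (hAsub hk)
  obtain ⟨haj, hbj⟩ := (mem_filter_univ _).1 (sdiff_subset hj)
  exact hkj (hQ a k b j hak hkb haj hbj)

end Biclique

section ChordSystem

variable {α V : Type*} [Fintype V] {H : SimpleGraph α} {I : V → Set α}

lemma mul_sq_card_le_sum_subtype [Nonempty V] {p : V → Prop} [DecidablePred p]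
    {q : V → V → Prop} {σ : ℝ} (h : σ ≤ 𝔼 i, 𝔼 j, iverson (p i ∧ q i j)) :
    σ * Fintype.card V ^ 2 ≤ ∑ i : Subtype p, ∑ j, iverson (q i j) := by
  have h_sum : ∑ i : Subtype p, ∑ j, iverson (q i j) = ∑ i, ∑ j, iverson (p i ∧ q i j) := by
    rw [← Finset.sum_subtype (Finset.univ.filter p) Finset.mem_filter_univ
      fun i => ∑ j, iverson (q i j), Finset.sum_filter]
    refine Finset.sum_congr rfl fun i _ => ?_
    split_ifs with hi
    · simp only [hi, true_and]
    · simp only [hi, false_and, iverson_of_false not_false, Finset.sum_const_zero]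
  simp only [Fintype.expect_eq_sum_div_card, ← Finset.sum_div, div_div, ← sq] at h
  rw [h_sum]
  exact (le_div_iff₀ (by positivity)).1 h

theorem ChordSystem.exists_biclique [Nonempty V] {t R : ℕ} {τ ρ : ℝ} (C : ChordSystem H I)
    (hH : K33MinorFree H) (hdeg : ∀ w, 𝔼 v, iverson (w ∈ I v) ≤ τ) (hρ : 0 < ρ)
    (h : ρ ≤ meetDensity C.chord C.branch) (hτ : τ ≤ ρ ^ 2 / 2) (ht : t ≠ 0)
    (hn : 1000 * t * (R + 2) ≤ (ρ ^ 2 / 2) ^ 3 * Fintype.card V) (hR : Fintype.card V ≤ 2 ^ R) :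
    ∃ A B : Finset V, Disjoint A B ∧ t ≤ A.card ∧ t ≤ B.card ∧
      ∀ a ∈ A, ∀ b ∈ B, (I a ∩ I b).Nonempty := by
  classical
  obtain ⟨x, E, hx, hE, hxE, hden⟩ := C.exists_base_point hdeg hρ h
  let P := {i // x ∉ C.chord i ∧ (E ∩ C.chord i).Nonempty}
  let nearer (i k : P) : Prop := C.IsNearer x i k
  have : IsStrictOrder P nearer :=
    { irrefl := fun i hi => hi.asymm hH hx i.2.1 i.2.1 hi
      trans := fun _ k l hik hkl => hik.trans hH hx k.2.1 l.2.1 hkl }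
  let _ : PartialOrder P := partialOrderOfSO nearer
  refine exists_biclique_of_between (Function.Embedding.subtype _)
    (Q := fun (i : P) j => (C.chord i ∩ C.branch j).Nonempty) (fun i k hik => ?_)
    (fun i k l j (hik : C.IsNearer x i k) (hkl : C.IsNearer x k l) hij hlj => ?_) ht
    (by positivity) (mul_sq_card_le_sum_subtype (le_trans (by linarith) hden)) hn hR
  · have hd := Set.not_nonempty_iff_eq_empty.1 hik
    exact isNearer_or_isNearer i.2.1 k.2.1 ((Set.disjoint_iff_inter_eq_empty.2 hd).mono
      (C.chord_subset i) (C.chord_subset k)) hE hxE i.2.2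
  · exact (hik.chord_inter_nonempty hH hx k.2.1 l.2.1 hkl
      (C.isFree_branch (hij.mono Set.inter_subset_right)) hij hlj).mono
      (Set.inter_subset_inter (C.chord_subset k) (C.branch_subset j))

end ChordSystem

/-! ### From plane sets to grid regions -/

section LazyWalk

variable {α : Type*} {H : SimpleGraph α} {S : Set α}

lemma exists_walk_subset_support (hH : H.Connected) (F : Finset α) :
    ∃ u v, ∃ w : H.Walk u v, ∀ x ∈ F, x ∈ w.support := by
  classical
  induction F using Finset.induction_on with
  | empty => exact ⟨_, _, .nil' hH.nonempty.some, by simp⟩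
  | insert x F _ ih =>
    obtain ⟨u, v, w, hw⟩ := ih
    refine ⟨u, x, w.append (hH v x).some, fun y hy => ?_⟩
    rw [Walk.mem_support_append_iff]
    rcases Finset.mem_insert.1 hy with rfl | hy
    exacts [.inr (Walk.end_mem_support _), .inl (hw y hy)]

lemma exists_isLazyWalk_range_eq (hS : (H.induce S).Connected) (hf : S.Finite) :
    ∃ g, IsLazyWalk H g ∧ Set.range g = S := by
  have := hf.fintype
  obtain ⟨u, v, w, hw⟩ := exists_walk_subset_support hS Finset.univ
  refine ⟨fun i => w.getVert i, fun i => ?_, Set.Subset.antisymm ?_ fun x hx => ?_⟩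
  · rcases lt_or_ge i w.length with hi | hi
    · exact .inr (w.adj_getVert_succ hi)
    · have h_stop := (w.getVert_of_length_le hi).trans
        (w.getVert_of_length_le (hi.trans i.le_succ)).symm
      exact .inl (congrArg Subtype.val h_stop)
  · rintro _ ⟨i, rfl⟩
    exact (w.getVert i).2
  · obtain ⟨i, hi, -⟩ := Walk.mem_support_iff_exists_getVert.1 (hw ⟨x, hx⟩ (Finset.mem_univ _))
    exact ⟨i, congrArg Subtype.val hi⟩

end LazyWalk

section Trace

variable {s : ℝ} {K L : Set (ℝ × ℝ)}

/-- The points `c` of `ℤ²` whose multiple `s • c` is at sup-distance less than `s` from `K`. -/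
def gridTrace (s : ℝ) (K : Set (ℝ × ℝ)) : Set (ℤ × ℤ) :=
  {c | s • ((c.1 : ℝ), (c.2 : ℝ)) ∈ Metric.thickening s K}

lemma mem_gridTrace {c : ℤ × ℤ} :
    c ∈ gridTrace s K ↔ s • ((c.1 : ℝ), (c.2 : ℝ)) ∈ Metric.thickening s K := .rfl

lemma gridTrace_mono (h : K ⊆ L) : gridTrace s K ⊆ gridTrace s L :=
  fun _ hc => Metric.thickening_subset_of_subset s h hc

lemma mem_gridTrace_singleton {p : ℝ × ℝ} {c : ℤ × ℤ} :
    c ∈ gridTrace s {p} ↔ |s * c.1 - p.1| < s ∧ |s * c.2 - p.2| < s := by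
  rw [mem_gridTrace, Metric.thickening_singleton, Metric.mem_ball, Prod.dist_eq, max_lt_iff]
  rfl

lemma gridTrace_singleton_nonempty (hs : 0 < s) (p : ℝ × ℝ) : (gridTrace s {p}).Nonempty := by
  have h_div (x : ℝ) : |s * toIcoDiv hs 0 x - x| < s := by
    obtain ⟨h₀, h₁⟩ := sub_toIcoDiv_zsmul_mem_Ico hs 0 x
    rw [zsmul_eq_mul, mul_comm] at h₀ h₁
    rw [abs_lt]
    constructor <;> linarith
  exact ⟨(toIcoDiv hs 0 p.1, toIcoDiv hs 0 p.2), mem_gridTrace_singleton.2 ⟨h_div _, h_div _⟩⟩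

lemma eq_or_hasse_adj_of_abs_lt (hs : 0 < s) {x : ℝ} {a b : ℤ} (ha : |s * a - x| < s)
    (hb : |s * b - x| < s) : a = b ∨ (hasse ℤ).Adj a b := by
  rw [abs_lt] at ha hb
  have hab : (a : ℝ) < b + 2 := lt_of_mul_lt_mul_left (by linarith) hs.le
  have hba : (b : ℝ) < a + 2 := lt_of_mul_lt_mul_left (by linarith) hs.le
  norm_cast at hab hba
  rw [hasse_adj, Order.covBy_iff_add_one_eq, Order.covBy_iff_add_one_eq]
  omega

lemma preconnected_gridTrace_singleton (hs : 0 < s) (p : ℝ × ℝ) :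
    (grid.induce (gridTrace s {p})).Preconnected := by
  rw [preconnected_induce_iff_reachable_within]
  rintro ⟨a, b⟩ hab ⟨a', b'⟩ hab'
  have hab₁ := mem_gridTrace_singleton.1 hab
  have hab₁' := mem_gridTrace_singleton.1 hab'
  have h_corner : (a', b) ∈ gridTrace s {p} := mem_gridTrace_singleton.2 ⟨hab₁'.1, hab₁.2⟩
  have h_horiz : (within grid (gridTrace s {p})).Reachable (a, b) (a', b) := by
    rcases eq_or_hasse_adj_of_abs_lt hs hab₁.1 hab₁'.1 with rfl | h
    · exact .rfl
    · exact Adj.reachable (within_adj.2 ⟨hab, h_corner, boxProd_adj.2 (.inl ⟨h, rfl⟩)⟩)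
  rcases eq_or_hasse_adj_of_abs_lt hs hab₁.2 hab₁'.2 with rfl | h
  · exact h_horiz
  · exact h_horiz.trans <| Adj.reachable <|
      within_adj.2 ⟨h_corner, hab', boxProd_adj.2 (.inr ⟨h, rfl⟩)⟩

lemma preconnected_gridTrace (hs : 0 < s) (hK : IsPreconnected K) :
    (grid.induce (gridTrace s K)).Preconnected := by
  have h_near {p : ℝ × ℝ} (hp : p ∈ K) {c d : ℤ × ℤ} (hc : c ∈ gridTrace s {p})
      (hd : d ∈ gridTrace s {p}) : (within grid (gridTrace s K)).Reachable c d :=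
    (preconnected_induce_iff_reachable_within.1 (preconnected_gridTrace_singleton hs p) c hc d
      hd).mono (within_mono (gridTrace_mono (Set.singleton_subset_iff.2 hp)))
  choose corner h_corner using gridTrace_singleton_nonempty hs
  have h_corners {p q : ℝ × ℝ} (hp : p ∈ K) (hq : q ∈ K) :
      (within grid (gridTrace s K)).Reachable (corner p) (corner q) := by
    refine hK.induction₂ (fun p q => (within grid (gridTrace s K)).Reachable (corner p) (corner q))
      (fun p _ => ?_) (fun _ _ _ _ _ _ h₁ h₂ => h₁.trans h₂) (fun _ _ _ _ h => h.symm) hp hq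
    have h_ball : ∀ᶠ q in 𝓝 p, corner p ∈ gridTrace s {q} := by
      have h_lt := Metric.mem_thickening_iff.1 (h_corner p)
      simp only [Set.mem_singleton_iff, exists_eq_left] at h_lt
      simp only [mem_gridTrace, Metric.mem_thickening_iff, Set.mem_singleton_iff, exists_eq_left]
      exact (continuous_const.dist continuous_id).continuousAt.eventually_lt continuousAt_const h_lt
    filter_upwards [h_ball.filter_mono nhdsWithin_le_nhds, self_mem_nhdsWithin] with q hq hqK
    exact h_near hqK hq (h_corner q)
  rw [preconnected_induce_iff_reachable_within]
  intro c hc d hd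
  obtain ⟨p, hp, hcp⟩ := Metric.mem_thickening_iff.1 hc
  obtain ⟨q, hq, hdq⟩ := Metric.mem_thickening_iff.1 hd
  have h_single {c : ℤ × ℤ} {p : ℝ × ℝ} (h : dist (s • ((c.1 : ℝ), (c.2 : ℝ))) p < s) :
      c ∈ gridTrace s {p} := Metric.mem_thickening_iff.2 ⟨p, rfl, h⟩
  exact (h_near hp (h_single hcp) (h_corner p)).trans <|
    (h_corners hp hq).trans (h_near hq (h_corner q) (h_single hdq))

lemma finite_gridTrace (hs : 0 < s) (hK : Bornology.IsBounded K) : (gridTrace s K).Finite := by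
  obtain ⟨R, hR⟩ := (Metric.isBounded_iff_subset_closedBall 0).1 (hK.thickening (δ := s))
  refine (isCompact_closedBall (0 : ℤ × ℤ) (R / s)).finite_of_discrete.subset fun c hc => ?_
  have h_norm := mem_closedBall_zero_iff.1 (hR (mem_gridTrace.1 hc))
  rw [norm_smul, Real.norm_of_nonneg hs.le, ← le_div_iff₀' hs] at h_norm
  exact mem_closedBall_zero_iff.2 h_norm

lemma eventually_gridTrace_inter_nonempty_iff (hK : IsCompact K) (hL : IsClosed L) :
    ∀ᶠ s in 𝓝[>] 0, (gridTrace s K ∩ gridTrace s L).Nonempty ↔ (K ∩ L).Nonempty := by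
  rcases (K ∩ L).eq_empty_or_nonempty with h | ⟨p, hpK, hpL⟩
  · obtain ⟨δ, hδ, hd⟩ := (Set.disjoint_iff_inter_eq_empty.2 h).exists_thickenings hK hL
    filter_upwards [Ioo_mem_nhdsGT hδ] with s hs
    rw [h, iff_false_right Set.not_nonempty_empty, Set.not_nonempty_iff_eq_empty,
      ← Set.disjoint_iff_inter_eq_empty]
    exact (hd.mono (Metric.thickening_mono hs.2.le K) (Metric.thickening_mono hs.2.le L)).preimage _
  · filter_upwards [self_mem_nhdsWithin] with s hs
    refine iff_of_true ?_ ⟨p, hpK, hpL⟩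
    exact (gridTrace_singleton_nonempty hs p).mono <| Set.subset_inter
      (gridTrace_mono (Set.singleton_subset_iff.2 hpK))
      (gridTrace_mono (Set.singleton_subset_iff.2 hpL))

end Trace

theorem exists_isLazyWalk_grid {V : Type*} [Finite V] {γ : V → Set (ℝ × ℝ)}
    (hcomp : ∀ v, IsCompact (γ v)) (hconn : ∀ v, IsConnected (γ v)) :
    ∃ g : V → ℕ → ℤ × ℤ, (∀ v, IsLazyWalk grid (g v)) ∧
      ∀ u v, (Set.range (g u) ∩ Set.range (g v)).Nonempty ↔ (γ u ∩ γ v).Nonempty := by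
  have h_scale : ∀ᶠ s in 𝓝[>] (0 : ℝ), ∀ u v,
      (gridTrace s (γ u) ∩ gridTrace s (γ v)).Nonempty ↔ (γ u ∩ γ v).Nonempty :=
    Filter.eventually_all.2 fun u => Filter.eventually_all.2 fun v =>
      eventually_gridTrace_inter_nonempty_iff (hcomp u) (hcomp v).isClosed
  obtain ⟨s, h_inter, hs⟩ := (h_scale.and self_mem_nhdsWithin).exists
  have h_walk (v : V) : ∃ g, IsLazyWalk grid g ∧ Set.range g = gridTrace s (γ v) := by
    have h_nonempty : Nonempty (gridTrace s (γ v)) := by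
      obtain ⟨p, hp⟩ := (hconn v).nonempty
      exact ((gridTrace_singleton_nonempty hs p).mono
        (gridTrace_mono (Set.singleton_subset_iff.2 hp))).to_subtype
    exact exists_isLazyWalk_range_eq
      { preconnected := preconnected_gridTrace hs (hconn v).isPreconnected }
      (finite_gridTrace hs (hcomp v).isBounded)
  choose g hg hrange using h_walk
  exact ⟨g, hg, by simpa only [hrange] using h_inter⟩

/-! ### Assembling the bound -/

section Density

variable {V : Type*} [Fintype V]

lemma two_mul_le_expect_iverson_adj [Nonempty V] (G : SimpleGraph V) [DecidableRel G.Adj] {ε : ℝ}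
    (hE : ε * Fintype.card V ^ 2 ≤ G.edgeFinset.card) :
    2 * ε ≤ 𝔼 u, 𝔼 v, iverson (G.Adj u v) := by
  have h_degree (u : V) : ∑ v, iverson (G.Adj u v) = G.degree u := by
    rw [← card_neighborFinset_eq_degree, neighborFinset_eq_filter, Finset.card_filter,
      Nat.cast_sum]
    exact Finset.sum_congr rfl fun v _ => by unfold iverson; split_ifs <;> simp
  have h_sum : ∑ u, ∑ v, iverson (G.Adj u v) = 2 * G.edgeFinset.card := by
    simp only [h_degree]
    exact_mod_cast G.sum_degrees_eq_twice_card_edges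
  simp only [Fintype.expect_eq_sum_div_card, ← Finset.sum_div, div_div, ← sq]
  rw [h_sum, le_div_iff₀ (by positivity)]
  linarith

variable {α : Type*} {I : V → Set α} {t : ℕ}

lemma exists_biclique_or_expect_iverson_mem_le (I : V → Set α) (t : ℕ) :
    (∃ A B : Finset V, Disjoint A B ∧ t ≤ A.card ∧ t ≤ B.card ∧
      ∀ a ∈ A, ∀ b ∈ B, (I a ∩ I b).Nonempty) ∨
      ∀ w, 𝔼 v, iverson (w ∈ I v) ≤ 2 * t / Fintype.card V := by
  classical
  refine or_iff_not_imp_right.2 fun h => ?_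
  obtain ⟨w, hw⟩ := not_forall.1 h
  let D : Finset V := {v | w ∈ I v}
  have hD : 2 * t ≤ D.card := by
    by_contra! hlt
    refine hw ?_
    rw [Fintype.expect_eq_sum_div_card]
    refine div_le_div_of_nonneg_right ?_ (Nat.cast_nonneg _)
    simp only [iverson, Finset.sum_boole]
    exact_mod_cast hlt.le
  obtain ⟨A, hAD, hA⟩ := Finset.exists_subset_card_eq (show t ≤ D.card by omega)
  refine ⟨A, D \ A, Finset.disjoint_sdiff, hA.ge, ?_, fun a ha b hb => ⟨w, ?_, ?_⟩⟩
  · rw [Finset.card_sdiff_of_subset hAD]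
    omega
  · exact (Finset.mem_filter_univ a).1 (hAD ha)
  · exact (Finset.mem_filter_univ b).1 (Finset.sdiff_subset hb)

end Density

section Logarithm

variable {n : ℕ}

lemma one_le_logb_two (hn : 2 ≤ n) : 1 ≤ Real.logb 2 n := by
  rw [Real.le_logb_iff_rpow_le one_lt_two (by positivity), Real.rpow_one]
  exact_mod_cast hn

lemma clog_add_two_le (hn : 2 ≤ n) : (Nat.clog 2 n : ℝ) + 2 ≤ 4 * Real.logb 2 n := by
  have h_log := one_le_logb_two hn
  have h_clog : (Nat.clog 2 n : ℝ) < Real.logb 2 n + 1 := by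
    rw [← Real.natCeil_logb_natCast]
    exact Nat.ceil_lt_add_one (by positivity)
  linarith

end Logarithm

/-- The exponent `b`: a chord system of density `ε ^ 27225` costs a sixth power, and the numerical
constants are absorbed by `ε ≤ 1 / 2`. -/
def bicliqueExponent : ℕ := 27225 * 6 + 16

lemma pow_bicliqueExponent_le {ε : ℝ} (hε : 0 ≤ ε) (hε' : ε ≤ 1 / 2) :
    ε ^ bicliqueExponent ≤ (ε ^ 27225) ^ 6 / 65536 := by
  rw [bicliqueExponent, pow_add, pow_mul, div_eq_mul_one_div]
  refine mul_le_mul_of_nonneg_left ?_ (by positivity)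
  exact (pow_le_pow_left₀ hε hε' 16).trans_eq (by norm_num)

section LazyWalk

variable {α V : Type*} [Fintype V] {H : SimpleGraph α} {g : V → ℕ → α} {ε : ℝ} {t : ℕ}

/-- Each walk is its own region, avoiding the empty hub. -/
def Strands.ofLazyWalk (hg : ∀ v, IsLazyWalk H (g v)) : Strands H (fun v => Set.range (g v)) ∅ where
  walk := g
  region v := Set.range (g v)
  isLazyWalk := hg
  range_walk _ _ := rfl
  region_subset _ := subset_rfl
  disjoint_region _ := Set.disjoint_empty _

lemma exists_biclique_of_isLazyWalk (hH : K33MinorFree H) (hg : ∀ v, IsLazyWalk H (g v))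
    (hε : 0 < ε) (hε' : ε ≤ 1 / 2)
    (h : ε ≤ meetDensity (fun v => Set.range (g v)) fun v => Set.range (g v))
    (hn : 2 ≤ Fintype.card V) (ht : t ≠ 0)
    (hsize : t * Real.logb 2 (Fintype.card V) ≤ 2 * ε ^ bicliqueExponent * Fintype.card V) :
    ∃ A B : Finset V, Disjoint A B ∧ t ≤ A.card ∧ t ≤ B.card ∧
      ∀ a ∈ A, ∀ b ∈ B, (Set.range (g a) ∩ Set.range (g b)).Nonempty := by
  refine (exists_biclique_or_expect_iverson_mem_le _ t).elim id fun hdeg => ?_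
  have : Nonempty V := Fintype.card_pos_iff.1 (by omega)
  have hcard : (0 : ℝ) < Fintype.card V := by positivity
  have hε1 : ε ≤ 1 := hε'.trans (by norm_num)
  have h_size : t * Real.logb 2 (Fintype.card V) ≤ (ε ^ 27225) ^ 6 / 32768 * Fintype.card V := by
    grw [hsize, pow_bicliqueExponent_le hε.le hε']
    exact le_of_eq (by ring)
  have h_pos : 0 < (ε ^ 27225) ^ 6 := by positivity
  have h_degree {k : ℕ} (hk : k ≤ 27225 * 6) : 2 * t / Fintype.card V ≤ ε ^ k / 16384 := by
    have ht_le := le_mul_of_one_le_right (Nat.cast_nonneg t) (one_le_logb_two hn)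
    have h_pow : (ε ^ 27225) ^ 6 ≤ ε ^ k := by
      rw [← pow_mul]
      exact pow_le_pow_of_le_one hε.le hε1 hk
    grw [← h_pow]
    rw [div_le_iff₀ hcard]
    linarith
  have h_slack (k : ℕ) {c : ℝ} (hc : 0 < c) (hc' : c ≤ 16384) : ε ^ k / 16384 ≤ ε ^ k / c :=
    div_le_div_of_nonneg_left (pow_nonneg hε.le k) hc hc'
  obtain ⟨C, hC⟩ := (Strands.ofLazyWalk hg).exists_chordSystem hdeg hε hε'
    ((h_degree (by norm_num)).trans (h_slack _ (by norm_num) (by norm_num))) h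
  refine C.exists_biclique hH hdeg (by positivity) hC ?_ ht ?_
    (Nat.le_pow_clog one_lt_two (Fintype.card V))
  · rw [← pow_mul]
    exact (h_degree (by norm_num)).trans (h_slack _ (by norm_num) (by norm_num))
  · have h_clog := mul_le_mul_of_nonneg_left (clog_add_two_le hn) (Nat.cast_nonneg (α := ℝ) t)
    have := mul_pos h_pos hcard
    linarith

end LazyWalk

section Continua

variable {V : Type*} [Fintype V] {G : SimpleGraph V} [DecidableRel G.Adj] {γ : V → Set (ℝ × ℝ)}
  {ε : ℝ}

lemma exists_biclique_of_continua (hcomp : ∀ v, IsCompact (γ v)) (hconn : ∀ v, IsConnected (γ v))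
    (hadj : ∀ u v, u ≠ v → (G.Adj u v ↔ (γ u ∩ γ v).Nonempty)) (hε : 0 < ε)
    (hn : 2 ≤ Fintype.card V) (hE : ε * Fintype.card V ^ 2 ≤ G.edgeFinset.card) {t : ℕ}
    (ht : t ≠ 0)
    (hsize : t * Real.logb 2 (Fintype.card V) ≤ 2 * ε ^ bicliqueExponent * Fintype.card V) :
    ∃ A B : Finset V, Disjoint A B ∧ t ≤ A.card ∧ t ≤ B.card ∧ ∀ a ∈ A, ∀ b ∈ B, G.Adj a b := by
  have : Nonempty V := Fintype.card_pos_iff.1 (by omega)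
  obtain ⟨g, hg, h_inter⟩ := exists_isLazyWalk_grid hcomp hconn
  have h_density := two_mul_le_expect_iverson_adj G hE
  have h_half : 2 * ε ≤ 1 := h_density.trans <| (expect_mono fun u =>
    expect_iverson_le_one (G.Adj u)).trans_eq (Finset.expect_const Finset.univ_nonempty 1)
  have h_meet : ε ≤ meetDensity (fun v => Set.range (g v)) fun v => Set.range (g v) :=
    (le_mul_of_one_le_left hε.le one_le_two).trans <| h_density.trans <|
      expect_mono fun u => expect_mono fun v => iverson_mono fun huv =>
        (h_inter u v).2 ((hadj u v huv.ne).1 huv)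
  obtain ⟨A, B, hAB, hA, hB, h⟩ := exists_biclique_of_isLazyWalk k33MinorFree_grid hg hε
    (by linarith) h_meet hn ht hsize
  exact ⟨A, B, hAB, hA, hB, fun a ha b hb => (hadj a b (Finset.disjoint_iff_ne.1 hAB a ha b hb)).2
    ((h_inter a b).1 (h a ha b hb))⟩

lemma exists_adj_of_mul_sq_card_le (hε : 0 < ε) [Nonempty V]
    (hE : ε * Fintype.card V ^ 2 ≤ G.edgeFinset.card) : ∃ u v, G.Adj u v := by
  obtain ⟨u, hu⟩ := exists_le_of_le_expect (two_mul_le_expect_iverson_adj G hE)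
  obtain ⟨v, hv⟩ := exists_le_of_le_expect hu
  exact ⟨u, v, of_iverson_pos ((by positivity : 0 < 2 * ε).trans_le hv)⟩

end Continua

end StringGraph

open StringGraph in
theorem dense_string_graph_bipartite_general :
    ∃ b : ℝ, 1 ≤ b ∧
      ∀ ε : ℝ, 0 < ε →
        ∀ (V : Type*) [Fintype V] (G : SimpleGraph V) [DecidableRel G.Adj] (γ : V → Set (ℝ × ℝ)),
          (∀ v, IsCompact (γ v)) → (∀ v, IsConnected (γ v)) →
          (∀ u v, u ≠ v → (G.Adj u v ↔ (γ u ∩ γ v).Nonempty)) → 2 ≤ Fintype.card V →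
          ε * (Fintype.card V : ℝ) ^ 2 ≤ G.edgeFinset.card →
          ∃ A B : Finset V, Disjoint A B ∧
            ε ^ b * (Fintype.card V : ℝ) / Real.logb 2 (Fintype.card V) ≤ A.card ∧
            ε ^ b * (Fintype.card V : ℝ) / Real.logb 2 (Fintype.card V) ≤ B.card ∧
            ∀ a ∈ A, ∀ b' ∈ B, G.Adj a b' := by
  refine ⟨bicliqueExponent, by norm_num [bicliqueExponent], ?_⟩
  intro ε hε V _ G _ γ hcomp hconn hadj hn hE
  have : Nonempty V := Fintype.card_pos_iff.1 (by omega)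
  have h_log : 0 < Real.logb 2 (Fintype.card V) := one_pos.trans_le (one_le_logb_two hn)
  rw [Real.rpow_natCast]
  rcases le_or_gt (ε ^ bicliqueExponent * Fintype.card V / Real.logb 2 (Fintype.card V)) 1
    with h_small | h_large
  · obtain ⟨u, v, huv⟩ := exists_adj_of_mul_sq_card_le hε hE
    exact ⟨{u}, {v}, Finset.disjoint_singleton.2 huv.ne, by simpa using h_small,
      by simpa using h_small, by simpa using huv⟩
  · have h_ceil := (Nat.ceil_lt_two_mul (lt_trans (by norm_num) h_large)).le
    obtain ⟨A, B, hAB, hA, hB, h⟩ := exists_biclique_of_continua hcomp hconn hadj hε hn hE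
      (Nat.ceil_pos.2 (one_pos.trans h_large)).ne' <| by
        rwa [← mul_div_assoc, ← mul_assoc, le_div_iff₀ h_log] at h_ceil
    exact ⟨A, B, hAB, Nat.ceil_le.1 hA, Nat.ceil_le.1 hB, h⟩

lemma IsCurve.isCompact {c : Set (ℝ × ℝ)} (hc : IsCurve c) : IsCompact c := by
  obtain ⟨f, hf, rfl⟩ := hc
  exact isCompact_Icc.image_of_continuousOn hf

lemma IsCurve.isConnected {c : Set (ℝ × ℝ)} (hc : IsCurve c) : IsConnected c := by
  obtain ⟨f, hf, rfl⟩ := hc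
  exact (isConnected_Icc zero_le_one).image f hf

/-- There is a constant `b ≥ 1` such that for every real `0 < ε ≤ 1`, every string graph
with `n ≥ 2` vertices and at least `ε·n²` edges contains a complete bipartite subgraph
whose two parts each have size at least `ε^b·n/log₂ n`. -/
theorem dense_string_graph_bipartite :
    ∃ b : ℝ, 1 ≤ b ∧
      ∀ (ε : ℝ), 0 < ε → ε ≤ 1 →
        ∀ (V : Type) [Fintype V] (G : SimpleGraph V) [DecidableRel G.Adj],
          IsStringGraph G → 2 ≤ Fintype.card V →
          ε * (Fintype.card V : ℝ) ^ 2 ≤ G.edgeFinset.card →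
          ∃ A B : Finset V, Disjoint A B ∧
            ε ^ b * (Fintype.card V : ℝ) / Real.logb 2 (Fintype.card V) ≤ A.card ∧
            ε ^ b * (Fintype.card V : ℝ) / Real.logb 2 (Fintype.card V) ≤ B.card ∧
            ∀ a ∈ A, ∀ b' ∈ B, G.Adj a b' := by
  obtain ⟨b, hb, h⟩ := dense_string_graph_bipartite_general
  exact ⟨b, hb, fun ε hε _ V _ G _ ⟨γ, hγ, hadj⟩ =>
    h ε hε V G γ (fun v => (hγ v).isCompact) (fun v => (hγ v).isConnected) hadj⟩
end

section
/- Let s ≥ 0 be a real number and let G be a finite simple graph on n ≥ 3 vertices such that every induced subgraph of G on k ≥ 3 vertices contains an independent set of size at least k·(log₂ k)^{−s}. Then the chromatic number of G is at most 4·(log₂ n)^{s+1}. -/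
/-!
Delete independent sets greedily, giving each a colour of its own. If every set of more than `r`
remaining vertices contains an independent set of at least an `a`-fraction of it, each deletion
multiplies the number of vertices left by at most `1 - a ≤ exp (-a)`. After at most `log n / a`
deletions no more than `r` vertices remain, and these get distinct colours. Here `r = 2`, and `a` is
the density `(log₂ n) ^ (-s)` guaranteed for the whole graph, the smallest one over all subgraphs.
-/

open Finset

section Coloring

variable {V : Type*} {G : SimpleGraph V}

theorem colorable_induce_union {s t : Set V} {m n : ℕ} (hs : (G.induce s).Colorable m)
    (ht : (G.induce t).Colorable n) : (G.induce (s ∪ t)).Colorable (m + n) := by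
  classical
  obtain ⟨C⟩ := hs
  obtain ⟨D⟩ := ht
  let color (v : ↥(s ∪ t)) : Fin m ⊕ Fin n :=
    if hv : v.1 ∈ s then .inl (C ⟨v, hv⟩) else .inr (D ⟨v, v.2.resolve_left hv⟩)
  have color_ne {v w : ↥(s ∪ t)} (hvw : (G.induce (s ∪ t)).Adj v w) : color v ≠ color w := by
    by_cases hv : v.1 ∈ s <;> by_cases hw : w.1 ∈ s <;>
      simp only [color, hv, hw, dite_true, dite_false, ne_eq, Sum.inl.injEq, Sum.inr.injEq,
        reduceCtorEq, not_false_eq_true]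
    · exact C.valid hvw
    · exact D.valid hvw
  simpa using (SimpleGraph.Coloring.mk color color_ne).colorable

theorem colorable_induce_one_iff_isIndepSet {s : Set V} :
    (G.induce s).Colorable 1 ↔ G.IsIndepSet s := by
  rw [SimpleGraph.colorable_one_iff, SimpleGraph.eq_bot_iff_forall_not_adj]
  exact ⟨fun h v hv w hw _ => h ⟨v, hv⟩ ⟨w, hw⟩, fun h v w hvw => h v.2 w.2 (G.ne_of_adj hvw) hvw⟩

theorem colorable_induce_card (W : Finset V) : (G.induce (W : Set V)).Colorable #W := by
  simpa using (G.induce (W : Set V)).colorable_of_fintype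

end Coloring

section Log

theorem log_div_add_one_le_log_div {a x y : ℝ} (ha : 0 < a) (hx : 0 < x) (hy : 0 < y)
    (hxy : y + x * a ≤ x) : Real.log y / a + 1 ≤ Real.log x / a := by
  have log_sub_log_le : Real.log y - Real.log x ≤ -a := calc
    Real.log y - Real.log x = Real.log (y / x) := (Real.log_div hy.ne' hx.ne').symm
    _ ≤ y / x - 1 := Real.log_le_sub_one_of_pos (div_pos hy hx)
    _ ≤ -a := by
      rw [sub_le_iff_le_add, div_le_iff₀ hx]
      linarith
  rw [div_add_one ha.ne']
  gcongr
  linarith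

theorem antitoneOn_logb_rpow_neg {b s : ℝ} (hb : 1 < b) (hs : 0 ≤ s) :
    AntitoneOn (fun x => Real.logb b x ^ (-s)) (Set.Ioi 1) := fun _ hx _ _ hxy =>
  Real.rpow_le_rpow_of_nonpos (Real.logb_pos hb hx)
    (Real.logb_le_logb_of_le hb (one_pos.trans hx) hxy) (neg_nonpos.2 hs)

theorem log_div_logb_rpow_neg {b x : ℝ} (s : ℝ) (h : 0 < Real.logb b x) :
    Real.log x / Real.logb b x ^ (-s) = Real.log b * Real.logb b x ^ (s + 1) := by
  have log_ne_zero : Real.log b ≠ 0 := fun hb => h.ne' (by rw [Real.logb, hb, div_zero])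
  have log_eq : Real.log x = Real.log b * Real.logb b x := (mul_div_cancel₀ _ log_ne_zero).symm
  rw [Real.rpow_neg h.le, div_inv_eq_mul, Real.rpow_add_one h.ne', log_eq]
  ring

end Log

section Greedy

variable {V : Type*} {G : SimpleGraph V} {r : ℕ}

theorem colorable_induce_of_forall_exists_isIndepSet {a : ℝ} (ha : 0 < a) (hr : 1 ≤ r)
    (W : Finset V)
    (h : ∀ U ⊆ W, r < #U → ∃ I ⊆ U, G.IsIndepSet (I : Set V) ∧ #U * a ≤ #I) :
    (G.induce (W : Set V)).Colorable (⌊Real.log #W / a⌋₊ + r) := by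
  classical
  induction W using Finset.strongInduction with
  | H W ih =>
  rcases le_or_gt #W r with hWr | hrW
  · exact (colorable_induce_card W).mono (by lia)
  obtain ⟨I, hIW, hI, hcard⟩ := h W subset_rfl hrW
  have hI_colorable := colorable_induce_one_iff_isIndepSet.2 hI
  rcases (W \ I).eq_empty_or_nonempty with hrest | hrest
  · rw [hIW.antisymm (sdiff_eq_empty_iff_subset.1 hrest)] at hI_colorable
    exact hI_colorable.mono (by lia)
  have hW_pos : (0 : ℝ) < #W := by exact_mod_cast (Nat.zero_le r).trans_lt hrW
  have hI_nonempty : I.Nonempty := by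
    rw [← card_pos, ← Nat.cast_pos (α := ℝ)]
    exact (mul_pos hW_pos ha).trans_le hcard
  have hrest_colorable := ih (W \ I) (sdiff_ssubset hIW hI_nonempty)
    fun U hU => h U (hU.trans sdiff_subset)
  have hrest_card : (#(W \ I) : ℝ) + #I = #W := by
    exact_mod_cast card_sdiff_add_card_eq_card hIW
  have hfloor : ⌊Real.log #(W \ I) / a⌋₊ + 1 ≤ ⌊Real.log #W / a⌋₊ := by
    rw [← Nat.floor_add_one (div_nonneg (Real.log_natCast_nonneg _) ha.le)]
    exact Nat.floor_le_floor (log_div_add_one_le_log_div ha hW_pos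
      (Nat.cast_pos.2 hrest.card_pos) (by linarith))
  have hW_colorable := colorable_induce_union hrest_colorable hI_colorable
  rw [← coe_union, sdiff_union_of_subset hIW] at hW_colorable
  exact hW_colorable.mono (by lia)

theorem colorable_of_forall_exists_isIndepSet [Fintype V] {f : ℕ → ℝ} (hr : 1 ≤ r)
    (hf : AntitoneOn f (Set.Ioi r)) (hf_pos : 0 < f (Fintype.card V))
    (h : ∀ W : Finset V, r < #W → ∃ I ⊆ W, G.IsIndepSet (I : Set V) ∧ #W * f #W ≤ #I) :
    G.Colorable (⌊Real.log (Fintype.card V) / f (Fintype.card V)⌋₊ + r) := by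
  have huniv := colorable_induce_of_forall_exists_isIndepSet (G := G) hf_pos hr univ
    fun W _ hW => by
      obtain ⟨I, hIW, hI, hcard⟩ := h W hW
      have f_card_le : f (Fintype.card V) ≤ f #W :=
        hf hW (hW.trans_le W.card_le_univ) W.card_le_univ
      exact ⟨I, hIW, hI, (mul_le_mul_of_nonneg_left f_card_le (Nat.cast_nonneg _)).trans hcard⟩
  rw [coe_univ, card_univ] at huniv
  exact huniv.of_hom G.induceUnivIso.symm.toHom

end Greedy

/-- If every induced subgraph of `G` on `k ≥ 3` vertices contains an independent set of
size at least `k·(log₂ k)^(−s)`, where `s ≥ 0` and `G` has `n ≥ 3` vertices, then the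
chromatic number of `G` is at most `4·(log₂ n)^(s+1)`. -/
theorem chromatic_number_from_independence
    (s : ℝ) (hs : 0 ≤ s)
    (V : Type) [Fintype V] (G : SimpleGraph V)
    (hn : 3 ≤ Fintype.card V)
    (hind : ∀ W : Finset V, 3 ≤ W.card →
      ∃ I : Finset V, I ⊆ W ∧ (I : Set V).Pairwise (fun u v => ¬ G.Adj u v) ∧
        (W.card : ℝ) * (Real.logb 2 W.card) ^ (-s) ≤ I.card) :
    ∃ k : ℕ, G.Colorable k ∧
      (k : ℝ) ≤ 4 * (Real.logb 2 (Fintype.card V)) ^ (s + 1) := by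
  set L := Real.logb 2 (Fintype.card V)
  have hL : 1 ≤ L := by
    rw [Real.le_logb_iff_rpow_le one_lt_two (by positivity), Real.rpow_one]
    exact_mod_cast (Nat.le_succ 2).trans hn
  have hL_pos : 0 < L := one_pos.trans_le hL
  have hanti : AntitoneOn (fun k : ℕ => Real.logb 2 k ^ (-s)) (Set.Ioi 2) :=
    (antitoneOn_logb_rpow_neg one_lt_two hs).comp_MonotoneOn (Nat.mono_cast.monotoneOn _)
      fun _ hk => Set.mem_Ioi.2 (Nat.one_lt_cast.2 (one_lt_two.trans hk))
  refine ⟨_, colorable_of_forall_exists_isIndepSet one_le_two hanti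
    (Real.rpow_pos_of_pos hL_pos _) hind, ?_⟩
  have hpow : 1 ≤ L ^ (s + 1) := Real.one_le_rpow hL (by linarith)
  rw [log_div_logb_rpow_neg s hL_pos, Nat.cast_add, Nat.cast_two]
  calc (⌊Real.log 2 * L ^ (s + 1)⌋₊ : ℝ) + 2
      ≤ Real.log 2 * L ^ (s + 1) + 2 := by gcongr; exact Nat.floor_le (by positivity)
    _ ≤ 1 * L ^ (s + 1) + 2 := by gcongr; linarith [Real.log_two_lt_d9]
    _ ≤ 4 * L ^ (s + 1) := by linarith
end
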